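/- arXiv:2501.14988 — 3 statements merged into one kernel-verified Lean document; each statement's English description precedes it below -/
import Mathlib

section
/- Let κ be a singular cardinal and U an ultrafilter over a set S. If U is κ⁺-decomposable and cf(κ)-decomposable, then U is κ-decomposable. -/
open Cardinal Set

universe u v

/-- An ultrafilter is uniform if all of its members have full cardinality. -/
def Uniform {α : Type u} (U : Ultrafilter α) : Prop := ∀ X ∈ U, #X = #α

/-- An ultrafilter `U` over `S` is `l`-decomposable if there is `f : S → l`
such that preimages of sets of size `< l` are not in `U`. -/
def Decomposable {S : Type u} (U : Ultrafilter S) (l : Cardinal.{v}) : Prop :=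
  ∃ f : S → l.out, ∀ X : Set l.out, #X < l → f ⁻¹' X ∉ U

/-- The character of an ultrafilter: the least cardinality of a base. -/
noncomputable def charU {α : Type u} (U : Ultrafilter α) : Cardinal.{u} :=
  sInf {c | ∃ B : Set (Set α), #B = c ∧ (∀ X ∈ B, X ∈ U) ∧ ∀ Y ∈ U, ∃ X ∈ B, X ⊆ Y}

/-- The ultrafilter number at a cardinal `κ`: the minimal character of a
uniform ultrafilter over (a set of size) `κ`. -/
noncomputable def uNumber (κ : Cardinal.{u}) : Cardinal.{u} :=
  sInf {c | ∃ U : Ultrafilter κ.out, Uniform U ∧ charU U = c}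

/-!
Regard the functions witnessing the two decomposability hypotheses as maps `δ : S → κ⁺` and
`h : S → cf(κ)` which tend to infinity along `U`.

If `U` is `(κ, κ⁺)`-regular, choose sets `B s` of size less than `κ` such that every `α < κ⁺` is
in `B s` for almost all `s`, and functions `f α : cf(κ) → κ`, for `α < κ⁺`, with an exact bound
`F`. Exactness makes `cf (F ρ)` tend to `κ`, so after raising `h` one may take, for almost all `s`,
a point `g s < F (h s)` above every `f α (h s)`, `α ∈ B s`. By exactness again `g s` avoids, for
almost all `s`, any given set of size less than `κ`, that is, `g` witnesses
`κ`-decomposability. Such an `f` is obtained, as in Shelah's trichotomy, by a recursion that makes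
it strongly increasing; club guessing shows that rounding `f` up to a small set of values
stabilises, and the limit of a finest such rounding is `F`.

For the other case follow Kanamori. If `δ` can be taken least modulo `U`, short cofinal subsets of
the `δ s` show that `U` is `(κ, κ⁺)`-regular, so suppose there is no least `δ` and `U` is not
regular. Inject each `δ s` into `κ` and let `a s α β` be the first point of `[β, δ s)` whose image
is below the images of all of `[α, β)`, or `δ s` if there is none. Using both assumptions one finds
`α i < b i < α j`, for `i < j < κ⁺`, such that for every large `β` almost all `s` satisfy
`a s (b i) β < a s (α i) β`. Fix `β` large for all `i < κ`. For each `s` these strict descents occur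
at finitely many `i` only, because `a s _ β` is antitone. Each `i < κ` thus belongs, for almost all
`s`, to a finite set depending on `s`, and the map sending `s` to that finite set witnesses
`κ`-decomposability.
-/

section

open Order Filter

section Cofinality

theorem mk_Iio_ord_toType_lt {c : Cardinal.{v}} (x : c.ord.ToType) : #(Iio x) < c := by
  simpa only [mk_ord_toType] using mk_Iio_lt x (by simp)

/-- The complete structure of the well-order of type `c.ord`, for infinite `c`. -/
noncomputable abbrev conditionallyCompleteLinearOrderBotToType {c : Cardinal.{v}} (hc : ℵ₀ ≤ c) :
    ConditionallyCompleteLinearOrderBot c.ord.ToType :=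
  have : Nonempty c.ord.ToType := by
    rw [← mk_ne_zero_iff, mk_ord_toType]
    exact (aleph0_pos.trans_le hc).ne'
  let _ := WellFoundedLT.toOrderBot c.ord.ToType
  WellFoundedLT.conditionallyCompleteLinearOrderBot c.ord.ToType

variable {T : Type v} [LinearOrder T]

theorem exists_forall_lt_of_mk_lt_cof {ι : Type v} (hι : #ι < cof T) (g : ι → T) :
    ∃ b, ∀ i, g i < b := by
  have hg : ¬IsCofinal (range g) := fun h => (cof_le h).not_gt (mk_range_le.trans_lt hι)
  simpa only [not_isCofinal_iff, forall_mem_range] using hg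

theorem exists_isCofinal_preimage_singleton {Γ : Type v} (hΓ : #Γ < cof T) (g : T → Γ) :
    ∃ γ, IsCofinal (g ⁻¹' {γ}) := by
  refine isCofinal_of_isCofinal_iUnion ?_ hΓ
  rw [← preimage_iUnion, iUnion_of_singleton, preimage_univ]
  exact IsCofinal.univ

theorem exists_lt_eq_of_antitone [NoMaxOrder T] {Γ M : Type v} [LinearOrder M] [WellFoundedLT M]
    (hΓ : #Γ < cof T) (g : T → Γ) {v : Γ → T → M} (hv : ∀ γ, Antitone (v γ)) :
    ∃ i j, i < j ∧ g i = g j ∧ v (g i) i = v (g i) j := by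
  obtain ⟨γ, hγ⟩ := exists_isCofinal_preimage_singleton hΓ g
  have : Nonempty T := by
    rw [← cof_ne_zero_iff]
    exact (zero_le.trans_lt hΓ).ne'
  obtain ⟨i, hi, hmin⟩ := WellFounded.has_min (wellFounded_lt.onFun (f := v γ)) _ hγ.nonempty
  obtain ⟨i', hii'⟩ := exists_gt i
  obtain ⟨j, hj, hi'j⟩ := hγ i'
  have hij := hii'.trans_le hi'j
  obtain rfl : g i = γ := hi
  exact ⟨i, j, hij, hj.symm, le_antisymm (not_lt.1 (hmin j hj)) (hv _ hij.le)⟩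

theorem exists_seq_apply_lt {J : Type v} [LinearOrder J] [WellFoundedLT J]
    (hJ : ∀ j : J, #(Iio j) < cof T) {P : Set T} (hP : IsCofinal P) (b : T → T) :
    ∃ e : J → T, (∀ j, e j ∈ P) ∧ ∀ i j, i < j → b (e i) < e j := by
  have hnext (j : J) (g : ∀ i, i < j → T) : ∃ y ∈ P, ∀ i (h : i < j), b (g i h) < y := by
    obtain ⟨x, hx⟩ := exists_forall_lt_of_mk_lt_cof (hJ j) (fun i : Iio j => b (g i.1 i.2))
    obtain ⟨y, hy, hxy⟩ := hP x
    exact ⟨y, hy, fun i h => (hx ⟨i, h⟩).trans_le hxy⟩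
  choose G hGP hG using hnext
  have he := WellFoundedLT.fix_eq G
  refine ⟨WellFoundedLT.fix G, fun j => ?_, fun i j h => ?_⟩
  · rw [he j]; exact hGP j _
  · rw [he j]; exact hG j (fun i _ => WellFoundedLT.fix G i) i h

theorem exists_isCofinal_below (k : T) :
    ∃ c ⊆ Iio k, #c = cof (Iio k) ∧ ∀ x < k, ∃ y ∈ c, x ≤ y := by
  obtain ⟨c, hc, hmk⟩ := exists_cof_eq (Iio k)
  refine ⟨(↑) '' c, by simp, by rw [mk_image_eq Subtype.val_injective, hmk], fun x hx => ?_⟩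
  obtain ⟨y, hy, hxy⟩ := hc ⟨x, hx⟩
  exact ⟨y, mem_image_of_mem _ hy, hxy⟩

theorem cof_Iio_le_mk {k : T} {D : Set T} (hDk : D ⊆ Iio k) (hD : ∀ x < k, ∃ y ∈ D, x ≤ y) :
    cof (Iio k) ≤ #D := by
  have hcof : IsCofinal (range (inclusion hDk)) := by
    rintro ⟨x, hx⟩
    obtain ⟨y, hy, hxy⟩ := hD x hx
    exact ⟨_, ⟨⟨y, hy⟩, rfl⟩, hxy⟩
  exact (cof_le hcof).trans mk_range_le

theorem exists_cof_Iio_eq_of_isCofinal [WellFoundedLT T] {E : Set T} (hE : IsCofinal E)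
    {ν : Cardinal.{v}} (hν : ν.IsRegular) (hνT : ν < cof T) :
    ∃ k, cof (Iio k) = ν ∧ ∀ x < k, ∃ e ∈ E, x < e ∧ e < k := by
  have : NoMaxOrder ν.ord.ToType := noMaxOrder hν.aleph0_le
  obtain ⟨e, heE, he⟩ := exists_seq_apply_lt (J := ν.ord.ToType)
    (fun j => (mk_Iio_ord_toType_lt j).trans hνT) hE id
  obtain ⟨k, hk, hmin⟩ := WellFounded.has_min wellFounded_lt {b | ∀ j, e j < b}
    (exists_forall_lt_of_mk_lt_cof (by rwa [mk_ord_toType]) e)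
  have hlim (x : T) (hx : x < k) : ∃ j, x < e j := by
    by_contra! h
    refine hmin x (fun i => ?_) hx
    obtain ⟨j, hij⟩ := exists_gt i
    exact (he i j hij).trans_le (h j)
  refine ⟨k, ?_, fun x hx => ?_⟩
  · have hmono : StrictMono (fun j => (⟨e j, hk j⟩ : Iio k)) := fun i j hij => he i j hij
    rw [← cof_congr_of_strictMono hmono, Ordinal.cof_toType, hν.cof_ord]
    rintro ⟨x, hx⟩
    obtain ⟨j, hj⟩ := hlim x hx
    exact ⟨_, mem_range_self j, hj.le⟩
  · obtain ⟨j, hj⟩ := hlim x hx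
    exact ⟨e j, heE j, hj, hk j⟩

end Cofinality

section ClubGuessing

theorem exists_isClub_seq {I T : Type v} [LinearOrder I] [WellFoundedLT I] [LinearOrder T]
    [WellFoundedLT T] (hT : ℵ₀ < cof T) (hI : ∀ i : I, #(Iio i) < cof T) {N : Set T → Set T}
    (hN : ∀ E, IsClub E → IsClub (N E)) :
    ∃ E : I → Set T, (∀ i, IsClub (E i)) ∧ ∀ i j, i < j → E j ⊆ E i ∩ N (E i) := by
  let G (j : I) (g : ∀ i, i < j → Set T) : Set T := ⋂ i : Iio j, g i.1 i.2 ∩ N (g i.1 i.2)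
  have hE := WellFoundedLT.fix_eq G
  refine ⟨WellFoundedLT.fix G, fun j => ?_, fun i j hij => ?_⟩
  · induction j using WellFoundedLT.induction with
    | ind j ih =>
      rw [hE j]
      exact IsClub.iInter hT.ne' (by simpa only [lift_id] using hI j)
        fun i => (ih i.1 i.2).inter hT.ne' (hN _ (ih i.1 i.2))
  · rw [hE j]
    exact iInter_subset _ (⟨i, hij⟩ : Iio j)

variable {T : Type v} [ConditionallyCompleteLinearOrderBot T] {E c : Set T} {k : T}

/-- Shelah's `drop(E, c)`: every point of `c` is pushed down to the largest point of the club `E`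
not above it. The points of `c` below all of `E` are discarded, since their supremum would be the
junk value `⊥`, which need not lie in `E`. -/
def clubDrop (E c : Set T) : Set T :=
  (fun γ => sSup (E ∩ Iic γ)) '' {γ ∈ c | (E ∩ Iic γ).Nonempty}

theorem sSup_inter_Iic_le (E : Set T) (γ : T) : sSup (E ∩ Iic γ) ≤ γ :=
  csSup_le' fun _ hx => hx.2

theorem le_sSup_inter_Iic {x γ : T} (hx : x ∈ E) (hxγ : x ≤ γ) : x ≤ sSup (E ∩ Iic γ) :=
  le_csSup (bddAbove_Iic.mono inter_subset_right) ⟨hx, hxγ⟩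

theorem clubDrop_subset_Iio (hck : c ⊆ Iio k) : clubDrop E c ⊆ Iio k := by
  rintro _ ⟨γ, ⟨hγ, -⟩, rfl⟩
  exact (sSup_inter_Iic_le E γ).trans_lt (hck hγ)

theorem exists_lt_mem_clubDrop (hE : ∀ x < k, ∃ e ∈ E, x < e ∧ e < k)
    (hc : ∀ x < k, ∃ y ∈ c, x ≤ y) {x : T} (hx : x < k) : ∃ y ∈ clubDrop E c, x < y := by
  obtain ⟨e, heE, hxe, hek⟩ := hE x hx
  obtain ⟨γ, hγ, heγ⟩ := hc e hek
  exact ⟨_, ⟨γ, ⟨hγ, e, heE, heγ⟩, rfl⟩, hxe.trans_le (le_sSup_inter_Iic heE heγ)⟩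

/-- Along a decreasing sequence of clubs longer than `#c`, some point of `c` is pushed down to the
same value at two stages, so the value at the earlier stage already lies in the later club. -/
theorem exists_clubDrop_subset [WellFoundedLT T] {I : Type v} [LinearOrder I] [NoMaxOrder I]
    {E N : I → Set T} (hE : ∀ i, IsClub (E i)) (hEN : ∀ i j, i < j → E j ⊆ E i ∩ N i)
    (hc : #c < cof I) : ∃ i, clubDrop (E i) c ⊆ N i := by
  by_contra! h
  have hbad (i : I) : ∃ γ : c, (E i ∩ Iic γ.1).Nonempty ∧ sSup (E i ∩ Iic γ.1) ∉ N i := by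
    obtain ⟨_, ⟨γ, ⟨hγ, hne⟩, rfl⟩, hN⟩ := not_subset.1 (h i)
    exact ⟨⟨γ, hγ⟩, hne, hN⟩
  choose γ hne hγ using hbad
  have hanti : Antitone E := antitone_iff_forall_lt.2 fun i j hij =>
    (hEN i j hij).trans inter_subset_left
  obtain ⟨i, j, hij, hγij, hsup⟩ := exists_lt_eq_of_antitone hc γ
    (v := fun γ i => sSup (E i ∩ Iic γ.1)) fun γ i j hij =>
      csSup_le_csSup' (bddAbove_Iic.mono inter_subset_right)
        (inter_subset_inter_left _ (hanti hij))
  have hmem : sSup (E j ∩ Iic (γ i).1) ∈ E j :=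
    (hE j).csSup_mem inter_subset_left (hγij ▸ hne j) (bddAbove_Iic.mono inter_subset_right)
  exact hγ i (hsup ▸ (hEN i j hij hmem).2)

theorem exists_club_guessing [WellFoundedLT T] {ν₀ : Cardinal.{v}} (h₀ : ℵ₀ ≤ ν₀)
    (hT : succ (succ ν₀) < cof T) :
    ∃ C : T → Set T, ∀ E, IsClub E → ∃ k, C k ⊆ E ∧ ν₀ < #(C k) ∧ ∀ x ∈ C k, ∃ y ∈ C k, x < y := by
  choose c hck hcmk hc using exists_isCofinal_below (T := T)
  by_contra! H
  have hguess (E : Set T) : ∃ N, IsClub N ∧ ∀ k, clubDrop E (c k) ⊆ N →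
      ν₀ < #(clubDrop E (c k)) → ∃ x ∈ clubDrop E (c k), ∀ y ∈ clubDrop E (c k), y ≤ x :=
    H fun k => clubDrop E (c k)
  choose N hN hguess using hguess
  have hν : (succ ν₀).IsRegular := isRegular_succ h₀
  have hI : (succ (succ ν₀)).IsRegular := isRegular_succ hν.aleph0_le
  let I := (succ (succ ν₀)).ord.ToType
  have : NoMaxOrder I := noMaxOrder hI.aleph0_le
  have hIT : #I < cof T := by rwa [mk_ord_toType]
  have hT₀ : ℵ₀ < cof T := hI.aleph0_le.trans_lt hT
  obtain ⟨E, hE, hEN⟩ := exists_isClub_seq (I := I) hT₀ (fun i => (mk_set_le _).trans_lt hIT)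
    fun E _ => hN E
  have hEI : IsClub (⋂ i, E i) := IsClub.iInter hT₀.ne' (by simpa only [lift_id] using hIT) hE
  obtain ⟨k, hk, hEk⟩ := exists_cof_Iio_eq_of_isCofinal hEI.isCofinal hν
    ((lt_succ _).trans hT)
  obtain ⟨i, hi⟩ := exists_clubDrop_subset (c := c k) hE hEN (by
    rw [hcmk, hk, Ordinal.cof_toType, hI.cof_ord]; exact lt_succ _)
  have hcof {x : T} (hx : x < k) : ∃ y ∈ clubDrop (E i) (c k), x < y :=
    exists_lt_mem_clubDrop (fun x hx => (hEk x hx).imp fun e he => ⟨iInter_subset E i he.1, he.2⟩)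
      (hc k) hx
  have hbig : ν₀ < #(clubDrop (E i) (c k)) := (lt_succ ν₀).trans_le <| hk.symm.trans_le <|
    cof_Iio_le_mk (clubDrop_subset_Iio (hck k)) fun x hx =>
      (hcof hx).imp fun y hy => ⟨hy.1, hy.2.le⟩
  obtain ⟨x, hx, hmax⟩ := hguess (E i) k hi hbig
  obtain ⟨y, hy, hxy⟩ := hcof (clubDrop_subset_Iio (hck k) hx)
  exact (hmax y hy).not_gt hxy

end ClubGuessing

section NormalMaps

variable {T P K : Type v}

theorem isClub_range_of_isNormal [ConditionallyCompleteLinearOrderBot T] [LinearOrder P]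
    {ξ : T → P} (hξ : IsNormal ξ) (hcof : IsCofinal (range ξ)) : IsClub (range ξ) := by
  refine ⟨dirSupClosed_iff_of_linearOrder.2 fun d hd hne a ha => ?_, hcof⟩
  have himage : ξ '' (ξ ⁻¹' d) = d := image_preimage_eq_of_subset hd
  have hne' : (ξ ⁻¹' d).Nonempty := image_nonempty.1 (himage ▸ hne)
  obtain ⟨_, ⟨w, rfl⟩, haw⟩ := hcof a
  have hbdd : BddAbove (ξ ⁻¹' d) := ⟨w, fun i hi => hξ.strictMono.le_iff_le.1 ((ha.1 hi).trans haw)⟩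
  have hlub := hξ.map_isLUB (isLUB_csSup hne' hbdd) hne'
  rw [himage] at hlub
  exact ⟨_, hlub.unique ha⟩

theorem isClub_preimage_of_isNormal [ConditionallyCompleteLinearOrderBot T] [LinearOrder P]
    [WellFoundedLT P] (hP : cof P ≠ ℵ₀) {ξ : T → P} (hξ : IsNormal ξ) (hcof : IsCofinal (range ξ))
    {E : Set P} (hE : IsClub E) : IsClub (ξ ⁻¹' E) := by
  constructor
  · refine dirSupClosed_iff_of_linearOrder.2 fun d hd hne a ha => ?_
    exact hE.isLUB_mem (image_subset_iff.2 hd) (hne.image ξ) (hξ.map_isLUB ha hne)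
  · intro x
    obtain ⟨_, ⟨hyE, ⟨y, rfl⟩⟩, hxy⟩ :=
      (hE.inter hP (isClub_range_of_isNormal hξ hcof)).isCofinal (ξ x)
    exact ⟨y, hyE, hξ.strictMono.le_iff_le.1 hxy⟩

theorem exists_isNormal_apply_le [LinearOrder T] [WellFoundedLT T]
    [ConditionallyCompleteLinearOrderBot K] (hT : ∀ j : T, #(Iio j) < cof K)
    (G : ∀ i : T, (Iic i → K) → K) (hG : ∀ i g, g ⟨i, le_rfl⟩ < G i g) :
    ∃ ξ : T → K, IsNormal ξ ∧ ∀ i j, i < j → G i (fun m => ξ m) ≤ ξ j := by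
  let R (j : T) (g : ∀ i, i < j → K) : K :=
    ⨆ i : Iio j, G i.1 (fun m => g m.1 (m.2.trans_lt i.2))
  let ξ := WellFoundedLT.fix R
  have hξ (j : T) : ξ j = ⨆ i : Iio j, G i.1 (fun m => ξ m) := WellFoundedLT.fix_eq R j
  have hstep (i j : T) (hij : i < j) : G i (fun m => ξ m) ≤ ξ j := by
    obtain ⟨b, hb⟩ := exists_forall_lt_of_mk_lt_cof (hT j) fun i : Iio j => G i.1 (fun m => ξ m)
    rw [hξ j]
    exact le_ciSup (f := fun i : Iio j => G i.1 (fun m => ξ m))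
      ⟨b, forall_mem_range.2 fun i => (hb i).le⟩ ⟨i, hij⟩
  refine ⟨ξ, isNormal_iff.2 ⟨fun i j hij => (hG i _).trans_le (hstep i j hij),
    fun o ho a ha => ?_⟩, hstep⟩
  rw [hξ o]
  refine ciSup_le' fun ⟨i, hi⟩ => ?_
  obtain ⟨i', hii', hi'o⟩ := ho.lt_iff_exists_lt.1 hi
  exact (hstep i i' hi'o).trans (ha i' hii')

theorem exists_isNormal_codRestrict_Iio [LinearOrder T] [LinearOrder K] [WellFoundedLT K]
    {ξ : T → K} (hξ : IsNormal ξ) (hT : #T < cof K) :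
    ∃ δ, ∃ hδ : ∀ i, ξ i ∈ Iio δ, IsNormal (codRestrict ξ (Iio δ) hδ) ∧
      IsCofinal (range (codRestrict ξ (Iio δ) hδ)) := by
  obtain ⟨δ, hδ, hmin⟩ := WellFounded.has_min wellFounded_lt {b | ∀ i, ξ i < b}
    (exists_forall_lt_of_mk_lt_cof hT ξ)
  refine ⟨δ, hδ, isNormal_iff.2 ⟨fun i j hij => hξ.strictMono hij,
    fun o ho a ha => (isNormal_iff.1 hξ).2 o ho a ha⟩, fun ⟨x, hx⟩ => ?_⟩
  by_contra! h
  refine hmin x (fun i => ?_) hx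
  exact h _ (mem_range_self i)

end NormalMaps

section StronglyIncreasing

variable {K L M : Type v}

/-- A sequence `f` of functions `L → M`, indexed by a well-order `K`, which increases modulo the
filter `l` and is continuous enough for pcf theory: whenever `δ : K` has a club of size less than
`κ` below it, some club below `δ` satisfies `f β < f δ` on one common set of coordinates. -/
structure StronglyIncreasing [LinearOrder K] [LT M] (κ : Cardinal.{v}) (l : Filter L)
    (f : K → L → M) : Prop where
  eventually_lt : ∀ ⦃β α⦄, β < α → ∀ᶠ ρ in l, f β ρ < f α ρ
  exists_isClub : ∀ (δ : K) (C : Set (Iio δ)), IsClub C → #C < κ →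
    ∃ E : Set (Iio δ), IsClub E ∧ ∀ᶠ ρ in l, ∀ β ∈ E, f β ρ < f δ ρ

theorem StronglyIncreasing.eventually_le [LinearOrder K] [Preorder M] {κ : Cardinal.{v}}
    {l : Filter L} {f : K → L → M} (hf : StronglyIncreasing κ l f) {β α : K} (h : β ≤ α) :
    ∀ᶠ ρ in l, f β ρ ≤ f α ρ := by
  obtain rfl | h := h.eq_or_lt
  · exact Eventually.of_forall fun _ => le_rfl
  · exact (hf.eventually_lt h).mono fun _ => le_of_lt

/-- The clubs are guessed before the sequence is built: at stage `i` all the sets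
`ξ '' (C k ∩ Iic i)`, for every candidate `k`, are bounded at once, and only afterwards is
the right `k` identified. -/
theorem StronglyIncreasing.exists_subsequence [ConditionallyCompleteLinearOrderBot K]
    [WellFoundedLT K] [NoMaxOrder K] [LinearOrder M] {κ : Cardinal.{v}} {l : Filter L}
    {f : K → L → M} (hf : StronglyIncreasing κ l f) {T : Type v}
    [ConditionallyCompleteLinearOrderBot T] [WellFoundedLT T] {ν₀ : Cardinal.{v}}
    (h₀ : ℵ₀ ≤ ν₀) (hT : succ (succ ν₀) < cof T) (hTκ : #T < κ) (hTK : #T < cof K)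
    {nx : K → K} (hnx : ∀ α, α < nx α) :
    ∃ (D : Set T) (ξ ζ : T → K), ν₀ < #D ∧ (∀ i ∈ D, ∃ j ∈ D, i < j) ∧
      (∀ i j, i < j → nx (ζ i) ≤ ξ j) ∧
      ∀ i ∈ D, ∀ᶠ ρ in l, ∀ m ∈ D, m ≤ i → f (ξ m) ρ ≤ f (ζ i) ρ := by
  obtain ⟨C, hC⟩ := exists_club_guessing h₀ hT
  let cap (A : Set K) : K := Classical.epsilon fun σ => ∀ᶠ ρ in l, ∀ α ∈ A, f α ρ ≤ f σ ρ
  have hbound (i : T) (g : Iic i → K) :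
      ∃ b, g ⟨i, le_rfl⟩ < b ∧ ∀ k, cap (g '' {m | m.1 ∈ C k}) < b := by
    obtain ⟨b, hb⟩ := exists_forall_lt_of_mk_lt_cof hTK fun k => cap (g '' {m | m.1 ∈ C k})
    obtain ⟨b', hb'⟩ := exists_gt (max b (g ⟨i, le_rfl⟩))
    exact ⟨b', (le_max_right _ _).trans_lt hb',
      fun k => (hb k).trans ((le_max_left _ _).trans_lt hb')⟩
  choose Z hZ hcapZ using hbound
  obtain ⟨ξ, hξ, hstep⟩ := exists_isNormal_apply_le (fun j => (mk_set_le _).trans_lt hTK)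
    (fun i g => nx (Z i g)) (fun i g => (hZ i g).trans (hnx _))
  obtain ⟨δ, hξδ, hnormal, hcof⟩ := exists_isNormal_codRestrict_Iio hξ hTK
  obtain ⟨E, hE, hEδ⟩ := hf.exists_isClub δ _ (isClub_range_of_isNormal hnormal hcof)
    (mk_range_le.trans_lt hTκ)
  have hcofδ : cof (Iio δ) ≠ ℵ₀ := by
    rw [← cof_congr_of_strictMono hnormal.strictMono hcof]
    exact ((h₀.trans (le_succ _)).trans_lt ((lt_succ _).trans hT)).ne'
  obtain ⟨k, hkE, hk, hkmax⟩ := hC _ (isClub_preimage_of_isNormal hcofδ hnormal hcof hE)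
  refine ⟨C k, ξ, fun i => Z i fun m => ξ m, hk, hkmax, hstep, fun i _ => ?_⟩
  let A : Set K := (fun m : Iic i => ξ m) '' {m | m.1 ∈ C k}
  have hA : ∃ σ, ∀ᶠ ρ in l, ∀ α ∈ A, f α ρ ≤ f σ ρ :=
    ⟨δ, hEδ.mono fun ρ hρ => forall_mem_image.2 fun m hm => (hρ _ (hkE hm)).le⟩
  filter_upwards [Classical.epsilon_spec hA, hf.eventually_lt (hcapZ i (fun m => ξ m) k)]
    with ρ hcap hlt m hm hmi
  have hmA : ξ m ∈ A := ⟨⟨m, hmi⟩, hm, rfl⟩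
  exact (hcap _ hmA).trans hlt.le

theorem mk_le_of_interleaved {T L M : Type v} [LinearOrder T] [WellFoundedLT T] [Preorder M]
    {l : Filter L} {D : Set T} (hD : ∀ i ∈ D, ∃ j ∈ D, i < j) {ξ ζ : T → L → M} {W : Set M}
    (hW : ∀ i ρ, ζ i ρ ∈ W) (hξζ : ∀ i ∈ D, ∀ᶠ ρ in l, ∀ m ∈ D, m ≤ i → ξ m ρ ≤ ζ i ρ)
    (hζξ : ∀ i j, i < j → ∃ᶠ ρ in l, ζ i ρ < ξ j ρ) : #D ≤ #L * #W := by
  have hnext (i : D) : ∃ i' ∈ D, ∃ σ, (∀ j ∈ D, i < j → i' ≤ j) ∧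
      (∀ m ∈ D, m ≤ i → ξ m σ ≤ ζ i σ) ∧ ζ i σ < ξ i' σ := by
    obtain ⟨i', ⟨hi'D, hii'⟩, hmin⟩ := WellFounded.has_min wellFounded_lt {j | j ∈ D ∧ i < j}
      (hD i i.2)
    obtain ⟨σ, hlt, hle⟩ := ((hζξ i i' hii').and_eventually (hξζ i i.2)).exists
    exact ⟨i', hi'D, σ, fun j hj hij => not_lt.1 (hmin j ⟨hj, hij⟩), hle, hlt⟩
  choose i' hi'D σ hi' hle hlt using hnext
  have hinc (a b : D) (hab : a.1 < b.1) (hσ : σ a = σ b) : ζ a (σ a) < ζ b (σ b) :=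
    (hlt a).trans_le (hσ ▸ hle b _ (hi'D a) (hi' a b b.2 hab))
  have hinj : Function.Injective fun i : D => (σ i, (⟨ζ i (σ i), hW i _⟩ : W)) := by
    intro a b hab
    obtain ⟨hσ, hζ⟩ := Prod.mk.inj hab
    rw [Subtype.mk.injEq] at hζ
    obtain h | h | h := lt_trichotomy a.1 b.1
    · exact absurd hζ (hinc a b h hσ).ne
    · exact Subtype.ext h
    · exact absurd hζ (hinc b a h hσ.symm).ne'
  simpa only [mk_prod, lift_id] using mk_le_of_injective hinj

section RoundUp

variable [CompleteLinearOrder M]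

/-- The least element of `Y` that is at least `x`, and `⊤` if there is none. -/
def roundUp (Y : Set M) (x : M) : M :=
  sInf (Y ∩ Ici x)

theorem le_roundUp (Y : Set M) (x : M) : x ≤ roundUp Y x :=
  le_sInf fun _ hy => hy.2

theorem roundUp_le {Y : Set M} {x y : M} (hy : y ∈ Y) (hxy : x ≤ y) : roundUp Y x ≤ y :=
  sInf_le ⟨hy, hxy⟩

theorem roundUp_mono (Y : Set M) : Monotone (roundUp Y) := fun _ _ h =>
  sInf_le_sInf (inter_subset_inter_right _ (Ici_subset_Ici.2 h))

theorem roundUp_anti {Y Y' : Set M} (h : Y ⊆ Y') (x : M) : roundUp Y' x ≤ roundUp Y x :=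
  sInf_le_sInf (inter_subset_inter_left _ h)

theorem roundUp_mem_insert_top [WellFoundedLT M] (Y : Set M) (x : M) :
    roundUp Y x ∈ insert ⊤ Y := by
  obtain h | h := (Y ∩ Ici x).eq_empty_or_nonempty
  · left
    rw [roundUp, h, _root_.sInf_empty]
  · exact Or.inr (csInf_mem h).1

end RoundUp

theorem mk_insert_le_of_aleph0_le {A : Set M} {c : Cardinal.{v}} (hc : ℵ₀ ≤ c) (hA : #A ≤ c)
    (x : M) : #(insert x A : Set M) ≤ c :=
  mk_insert_le.trans (add_le_of_le hc hA (one_le_aleph0.trans hc))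

theorem mk_iUnion_le_of_le {ι α : Type v} {c : Cardinal.{v}} (hc : ℵ₀ ≤ c) (hι : #ι ≤ c)
    {A : ι → Set α} (hA : ∀ i, #(A i) ≤ c) : #(⋃ i, A i) ≤ c :=
  (mk_iUnion_le A).trans (mul_le_of_le hc hι (ciSup_le' hA))

theorem exists_monotone_seq_of_small {c : Cardinal.{v}} (hc : ℵ₀ ≤ c) {Z : Set M → Set M}
    (hZ : ∀ Y, #(Z Y) ≤ c) :
    ∃ Y : (succ c).ord.ToType → Set M, Monotone Y ∧ (∀ i, #(Y i) ≤ c) ∧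
      ∀ i j, i < j → Z (Y i) ⊆ Y j := by
  let Y := WellFoundedLT.fix (motive := fun _ : (succ c).ord.ToType => Set M)
    fun j g => ⋃ i : Iio j, Z (g i.1 i.2)
  have hY (j) : Y j = ⋃ i : Iio j, Z (Y i) := WellFoundedLT.fix_eq _ j
  refine ⟨Y, fun i j hij => ?_, fun j => ?_, fun i j hij => ?_⟩
  · rw [hY i, hY j]
    exact iUnion_mono' fun k => ⟨⟨k, k.2.trans_le hij⟩, Subset.rfl⟩
  · rw [hY j]
    exact mk_iUnion_le_of_le hc (lt_succ_iff.1 (mk_Iio_ord_toType_lt j)) fun i => hZ _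
  · rw [hY j]
    exact subset_iUnion (fun i : Iio j => Z (Y i)) ⟨i, hij⟩

section Stabilisation

variable [ConditionallyCompleteLinearOrderBot K] [WellFoundedLT K] [NoMaxOrder K]
  [CompleteLinearOrder M] [WellFoundedLT M] [Infinite L] {κ : Cardinal.{v}} {l : Filter L}
  {f : K → L → M}

theorem StronglyIncreasing.exists_eventually_roundUp_eq (hf : StronglyIncreasing κ l f)
    (hκ : IsSuccLimit κ) (hL : #L < κ) (hK : κ ≤ cof K) {Y : Set M} (hY : #Y < κ) :
    ∃ α₀, ∀ α ≥ α₀, ∀ᶠ ρ in l, roundUp Y (f α ρ) = roundUp Y (f α₀ ρ) := by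
  by_contra! h
  have hnext (α : K) : ∃ α' > α, ∃ᶠ ρ in l, roundUp Y (f α ρ) < roundUp Y (f α' ρ) := by
    obtain ⟨α', hle, hne⟩ := h α
    obtain rfl | hlt := hle.eq_or_lt
    · simp at hne
    · exact ⟨α', hlt, (hne.and_eventually (hf.eventually_le hle)).mono fun ρ hρ =>
        (roundUp_mono Y hρ.2).lt_of_ne' hρ.1⟩
  choose nx hnx hnxY using hnext
  let ν₀ : Cardinal.{v} := max #L #Y
  have h₀ : ℵ₀ ≤ ν₀ := (aleph0_le_mk L).trans (le_max_left _ _)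
  have hT : (succ (succ (succ ν₀))).IsRegular :=
    isRegular_succ (h₀.trans ((le_succ _).trans (le_succ _)))
  let T := (succ (succ (succ ν₀))).ord.ToType
  let _ := conditionallyCompleteLinearOrderBotToType hT.aleph0_le
  have hTκ : #T < κ := by
    rw [mk_ord_toType]
    exact hκ.succ_lt (hκ.succ_lt (hκ.succ_lt (max_lt hL hY)))
  obtain ⟨D, ξ, ζ, hνD, hD, hstep, hξζ⟩ := hf.exists_subsequence (T := T) h₀
    (by rw [Ordinal.cof_toType, hT.cof_ord]; exact lt_succ _) hTκ (hTκ.trans_le hK) hnx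
  have hDle : #D ≤ #L * #(insert ⊤ Y : Set M) := mk_le_of_interleaved
    (ξ := fun i ρ => roundUp Y (f (ξ i) ρ)) (ζ := fun i ρ => roundUp Y (f (ζ i) ρ)) hD
    (fun i ρ => roundUp_mem_insert_top Y _)
    (fun i hi => (hξζ i hi).mono fun ρ hρ m hm hmi => roundUp_mono Y (hρ m hm hmi))
    fun i j hij => ((hnxY (ζ i)).and_eventually (hf.eventually_le (hstep i j hij))).mono
      fun ρ hρ => hρ.1.trans_le (roundUp_mono Y hρ.2)
  refine hνD.not_ge (hDle.trans (mul_le_of_le h₀ (le_max_left _ _) ?_))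
  exact mk_insert_le_of_aleph0_le h₀ (le_max_right _ _) _

theorem StronglyIncreasing.exists_limit_roundUp (hf : StronglyIncreasing κ l f)
    (hκ : IsSuccLimit κ) (hL : #L < κ) (hK : κ ≤ cof K) {Y : Set M} (hY : #Y < κ) :
    ∃ g : L → M, ∀ᶠ α in atTop, ∀ᶠ ρ in l, roundUp Y (f α ρ) = g ρ := by
  obtain ⟨α₀, hα₀⟩ := hf.exists_eventually_roundUp_eq hκ hL hK hY
  exact ⟨fun ρ => roundUp Y (f α₀ ρ), (eventually_ge_atTop α₀).mono hα₀⟩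

theorem StronglyIncreasing.exists_finer_of_frequently_ne (hf : StronglyIncreasing κ l f)
    (hκ : IsSuccLimit κ) (hL : #L < κ) (hK : κ ≤ cof K) {Y Y' : Set M} (hYY' : Y ⊆ Y')
    (hY' : #Y' < κ)
    (hne : ∃ᶠ α in atTop, ∃ᶠ ρ in l, roundUp Y' (f α ρ) ≠ roundUp Y (f α ρ)) :
    ∃ Z : Set M, #Z ≤ #L ∧
      ∀ᶠ α in atTop, ∃ᶠ ρ in l, roundUp Z (f α ρ) < roundUp Y (f α ρ) := by
  obtain ⟨g, hg⟩ := hf.exists_limit_roundUp hκ hL hK ((mk_le_mk_of_subset hYY').trans_lt hY')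
  obtain ⟨g', hg'⟩ := hf.exists_limit_roundUp hκ hL hK hY'
  have hlt : ∃ᶠ ρ in l, g' ρ < g ρ := by
    obtain ⟨α, hα, hgα, hgα'⟩ := (hne.and_eventually (hg.and hg')).exists
    refine (hα.and_eventually (hgα.and hgα')).mono ?_
    rintro ρ ⟨h, h₁, h₂⟩
    rw [← h₁, ← h₂]
    exact (roundUp_anti hYY' _).lt_of_ne h
  refine ⟨range g', mk_range_le, ?_⟩
  filter_upwards [hg, hg'] with α hgα hgα'
  refine (hlt.and_eventually (hgα.and hgα')).mono ?_
  rintro ρ ⟨h, h₁, h₂⟩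
  rw [h₁]
  exact (roundUp_le (mem_range_self ρ) ((le_roundUp Y' _).trans_eq h₂)).trans_lt h

/-- Otherwise `#L⁺` successive refinements would make the rounded values drop infinitely often
at a single coordinate. -/
theorem StronglyIncreasing.exists_finest (hf : StronglyIncreasing κ l f)
    (hκ : IsSuccLimit κ) (hL : #L < κ) (hK : κ ≤ cof K) :
    ∃ Y : Set M, #Y ≤ #L ∧ ∀ Y', Y ⊆ Y' → #Y' < κ →
      ∀ᶠ α in atTop, ∀ᶠ ρ in l, roundUp Y' (f α ρ) = roundUp Y (f α ρ) := by
  by_contra! hcon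
  have hrefine (Y : Set M) : ∃ (Z : Set M) (α₀ : K), #Z ≤ #L ∧ (#Y ≤ #L →
      ∀ α ≥ α₀, ∃ᶠ ρ in l, roundUp Z (f α ρ) < roundUp Y (f α ρ)) := by
    by_cases hY : #Y ≤ #L
    · obtain ⟨Y', hYY', hY', hne⟩ := hcon Y hY
      obtain ⟨Z, hZ, hlt⟩ := hf.exists_finer_of_frequently_ne hκ hL hK hYY' hY' hne
      obtain ⟨α₀, hα₀⟩ := eventually_atTop.1 hlt
      exact ⟨Z, α₀, hZ, fun _ => hα₀⟩
    · exact ⟨∅, ⊥, by simp, fun h => absurd h hY⟩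
  choose Z α₀ hZ hlt using hrefine
  have hLinf : ℵ₀ ≤ #L := aleph0_le_mk L
  obtain ⟨Y, hYmono, hYL, hZY⟩ := exists_monotone_seq_of_small hLinf hZ
  have hI : (succ #L).IsRegular := isRegular_succ hLinf
  obtain ⟨α, hα⟩ := exists_forall_lt_of_mk_lt_cof
    (by rw [mk_ord_toType]; exact (hκ.succ_lt hL).trans_le hK) fun i => α₀ (Y i)
  choose ρ hρ using fun i => (hlt (Y i) (hYL i) α (hα i).le).exists
  have : NoMaxOrder (succ #L).ord.ToType := noMaxOrder hI.aleph0_le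
  obtain ⟨i, j, hij, -, heq⟩ := exists_lt_eq_of_antitone
    (by rw [Ordinal.cof_toType, hI.cof_ord]; exact lt_succ _) ρ
    (v := fun σ i => roundUp (Y i) (f α σ)) fun σ i j hij => roundUp_anti (hYmono hij) _
  exact ((roundUp_anti (hZY i j hij) _).trans_lt (hρ i)).ne' heq

end Stabilisation

/-- `F` is an exact bound of `f` modulo `l`: a strict upper bound such that every set of fewer
than `κ` values misses the intervals `[f α ρ, F ρ)`, for `α` large and almost all `ρ`. -/
structure IsExactBound [Preorder K] [Preorder M] (κ : Cardinal.{v}) (l : Filter L)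
    (f : K → L → M) (F : L → M) : Prop where
  eventually_lt : ∀ α, ∀ᶠ ρ in l, f α ρ < F ρ
  eventually_le : ∀ X : Set M, #X < κ →
    ∀ᶠ α in atTop, ∀ᶠ ρ in l, ∀ x ∈ X, f α ρ ≤ x → F ρ ≤ x

theorem StronglyIncreasing.exists_isExactBound [ConditionallyCompleteLinearOrderBot K]
    [WellFoundedLT K] [NoMaxOrder K] [CompleteLinearOrder M] [WellFoundedLT M] [Infinite L]
    {κ : Cardinal.{v}} {l : Filter L} {f : K → L → M} (hf : StronglyIncreasing κ l f)
    (hκ : IsSuccLimit κ) (hL : #L < κ) (hK : κ ≤ cof K) :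
    ∃ F : L → M, IsExactBound κ l f F := by
  have hκinf : ℵ₀ ≤ κ := (aleph0_le_mk L).trans hL.le
  obtain ⟨Y, hY, hfinest⟩ := hf.exists_finest hκ hL hK
  obtain ⟨F, hF⟩ := hf.exists_limit_roundUp hκ hL hK (hY.trans_lt hL)
  refine ⟨F, fun α => ?_, fun X hX => ?_⟩
  · obtain ⟨β, hβ, hαβ⟩ := (hF.and (eventually_gt_atTop α)).exists
    filter_upwards [hβ, hf.eventually_lt hαβ] with ρ heq hlt
    exact hlt.trans_le ((le_roundUp Y _).trans_eq heq)
  · have hYX : #(Y ∪ X : Set M) < κ :=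
      (mk_union_le _ _).trans_lt (add_lt_of_lt hκinf (hY.trans_lt hL) hX)
    filter_upwards [hF, hfinest _ subset_union_left hYX] with α hα hαX
    filter_upwards [hα, hαX] with ρ hFρ hXρ x hx hle
    rw [← hFρ, ← hXρ]
    exact roundUp_le (Or.inr hx) hle

theorem IsExactBound.eventually_lt_cof [LinearOrder K] [Nonempty K] [LinearOrder M] [Infinite L]
    {κ : Cardinal.{v}} {l : Filter L} {f : K → L → M} {F : L → M} (hF : IsExactBound κ l f F)
    (hL : #L < κ) {m : Cardinal.{v}} (hm : m < κ) : ∀ᶠ ρ in l, m < cof (Iio (F ρ)) := by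
  choose c hcF hc hcof using fun ρ => exists_isCofinal_below (F ρ)
  let X : Set M := ⋃ ρ : {ρ | cof (Iio (F ρ)) ≤ m}, c ρ
  have hX : #X ≤ max #L m := mk_iUnion_le_of_le ((aleph0_le_mk L).trans (le_max_left _ _))
    ((mk_set_le _).trans (le_max_left _ _)) fun ρ => (hc ρ).trans_le (ρ.2.trans (le_max_right _ _))
  obtain ⟨α, hα⟩ := (hF.eventually_le X (hX.trans_lt (max_lt hL hm))).exists
  filter_upwards [hα, hF.eventually_lt α] with ρ hle hlt
  by_contra! hρ
  obtain ⟨x, hx, hxf⟩ := hcof ρ _ hlt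
  exact (hle x (mem_iUnion.2 ⟨⟨ρ, hρ⟩, hx⟩) hxf).not_gt (hcF ρ hx)

end StronglyIncreasing

section Existence

variable {K L M : Type v} {κ : Cardinal.{v}} {l : Filter L} {μ : L → Cardinal.{v}}

theorem exists_mk_Iio_eq {c m : Cardinal.{v}} (h : m < c) : ∃ x : c.ord.ToType, #(Iio x) = m := by
  obtain ⟨x, hx⟩ := Ordinal.typein_surj (α := c.ord.ToType) (· < ·) (o := m.ord)
    (by rw [Ordinal.type_toType]; exact ord_lt_ord.2 h)
  have hcard := Ordinal.card_typein (r := ((· < ·) : c.ord.ToType → c.ord.ToType → Prop)) x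
  rw [hx, card_ord] at hcard
  exact ⟨x, hcard.symm⟩

theorem mk_setOf_mk_Iio_lt_le (c m : Cardinal.{v}) : #{x : c.ord.ToType | #(Iio x) < m} ≤ m := by
  obtain h | h := le_or_gt c m
  · exact (mk_set_le _).trans (by rwa [mk_ord_toType])
  · obtain ⟨x, hx⟩ := exists_mk_Iio_eq h
    refine (mk_le_mk_of_subset fun y (hy : #(Iio y) < m) => ?_).trans_eq hx
    exact lt_of_not_ge fun hxy => (mk_le_mk_of_subset (Iio_subset_Iio hxy)).not_gt (hx.symm ▸ hy)

theorem exists_small_sets_of_mk_le {X : Type v} (hX : #X ≤ κ) (hμ₀ : ∀ ρ, ℵ₀ ≤ μ ρ)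
    (hμ : ∀ m < κ, ∀ᶠ ρ in l, m < μ ρ) (E : Set X) :
    ∃ A : L → Set X, (∀ ρ, #(A ρ) ≤ μ ρ) ∧ (∀ x, ∀ᶠ ρ in l, x ∈ A ρ) ∧
      (#E < κ → ∀ᶠ ρ in l, E ⊆ A ρ) := by
  rw [← mk_ord_toType κ] at hX
  obtain ⟨e⟩ := hX
  refine ⟨fun ρ => e ⁻¹' {i | #(Iio i) < μ ρ} ∪ {x ∈ E | #E ≤ μ ρ}, fun ρ => ?_, fun x => ?_, ?_⟩
  · refine (mk_union_le _ _).trans (add_le_of_le (hμ₀ ρ) ?_ ?_)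
    · exact (mk_preimage_of_injective _ _ e.injective).trans (mk_setOf_mk_Iio_lt_le _ _)
    · by_cases h : #E ≤ μ ρ
      · exact (mk_le_mk_of_subset (sep_subset _ _)).trans h
      · simp [h]
  · exact (hμ _ (mk_Iio_ord_toType_lt (e x))).mono fun ρ h => Or.inl h
  · exact fun hE => (hμ _ hE).mono fun ρ h x hx => Or.inr ⟨hx, h.le⟩

theorem exists_lt_of_mem_of_small [LinearOrder K] [WellFoundedLT K] [CompleteLinearOrder M]
    [WellFoundedLT M] (hM : κ ≤ #M) (hμ₀ : ∀ ρ, ℵ₀ ≤ μ ρ) (hμκ : ∀ ρ, μ ρ < κ)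
    {A : ∀ α : K, L → Set (Iio α)} (hA : ∀ α ρ, #(A α ρ) ≤ μ ρ) :
    ∃ f : K → L → M, ∀ α ρ, ∀ β ∈ A α ρ, f β ρ < f α ρ := by
  let f := WellFoundedLT.fix (motive := fun _ : K => L → M)
    fun α g ρ => sInf {x | ∀ β : A α ρ, g β.1 β.1.2 ρ < x}
  have hf (α : K) (ρ : L) : f α ρ = sInf {x | ∀ β : A α ρ, f β.1 ρ < x} :=
    congrFun (WellFoundedLT.fix_eq (motive := fun _ : K => L → M) _ α) ρ
  have hunion (α ρ) (ih : ∀ β < α, #(Iic (f β ρ)) ≤ μ ρ) :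
      #(⋃ β : A α ρ, Iic (f β.1 ρ)) ≤ μ ρ :=
    mk_iUnion_le_of_le (hμ₀ ρ) (hA α ρ) fun β => ih β.1 β.1.2
  have hsmall (α ρ) : #(Iic (f α ρ)) ≤ μ ρ := by
    induction α using WellFoundedLT.induction with
    | ind α ih =>
      rw [← Iio_insert]
      refine mk_insert_le_of_aleph0_le (hμ₀ ρ) ((mk_le_mk_of_subset fun x hx => ?_).trans
        (hunion α ρ ih)) _
      by_contra! hx'
      simp only [mem_iUnion, mem_Iic, not_exists, not_le] at hx'
      exact ((hf α ρ).trans_le (sInf_le hx')).not_gt hx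
  refine ⟨f, fun α ρ β hβ => ?_⟩
  have hne : {x | ∀ β : A α ρ, f β.1 ρ < x}.Nonempty := by
    by_contra! hempty
    refine (hM.trans (mk_univ.ge.trans ((mk_le_mk_of_subset fun x _ => ?_).trans
      (hunion α ρ fun β _ => hsmall β ρ)))).not_gt (hμκ ρ)
    have hx := eq_empty_iff_forall_notMem.1 hempty x
    simp only [mem_ofPred_eq, not_forall, not_lt] at hx
    exact mem_iUnion.2 hx
  have hmem := csInf_mem hne
  rw [← hf α ρ] at hmem
  exact hmem ⟨β, hβ⟩

theorem exists_stronglyIncreasing [LinearOrder K] [WellFoundedLT K] [CompleteLinearOrder M]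
    [WellFoundedLT M] (hK : ∀ α : K, #(Iio α) ≤ κ) (hM : κ ≤ #M) (hμ₀ : ∀ ρ, ℵ₀ ≤ μ ρ)
    (hμκ : ∀ ρ, μ ρ < κ) (hμ : ∀ m < κ, ∀ᶠ ρ in l, m < μ ρ) :
    ∃ f : K → L → M, StronglyIncreasing κ l f := by
  let E (δ : K) : Set (Iio δ) := Classical.epsilon fun C => IsClub C ∧ #C < κ
  have hE {δ : K} {C : Set (Iio δ)} (hC : IsClub C ∧ #C < κ) : IsClub (E δ) ∧ #(E δ) < κ :=
    Classical.epsilon_spec (p := fun C => IsClub C ∧ #C < κ) ⟨C, hC⟩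
  choose A hA hAmem hEA using fun δ => exists_small_sets_of_mk_le (hK δ) hμ₀ hμ (E δ)
  obtain ⟨f, hf⟩ := exists_lt_of_mem_of_small (M := M) hM hμ₀ hμκ hA
  refine ⟨f, fun β α h => ?_, fun δ C hC hCκ => ⟨E δ, (hE ⟨hC, hCκ⟩).1, ?_⟩⟩
  · exact (hAmem α ⟨β, h⟩).mono fun ρ hρ => hf α ρ _ hρ
  · exact (hEA δ (hE ⟨hC, hCκ⟩).2).mono fun ρ hρ β hβ => hf δ ρ β (hρ hβ)

end Existence

section SingularScale

theorem mk_withTop_ord_toType {c : Cardinal.{v}} (hc : ℵ₀ ≤ c) : #(WithTop c.ord.ToType) = c :=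
  mk_option.trans (by rw [mk_ord_toType, add_one_eq hc])

variable {κ : Cardinal.{v}}

theorem exists_tendsto_cardinals (hκ : κ.IsSingular) :
    ∃ μ : κ.ord.cof.ord.ToType → Cardinal.{v}, (∀ ρ, ℵ₀ ≤ μ ρ) ∧ (∀ ρ, μ ρ < κ) ∧
      ∀ m < κ, ∀ᶠ ρ in atTop, m < μ ρ := by
  obtain ⟨D, hD, hDtype⟩ := Ordinal.exists_ord_cof_eq κ.ord.ToType
  rw [Ordinal.cof_toType] at hDtype
  obtain ⟨e⟩ := Ordinal.type_eq.1 ((Ordinal.type_toType _).trans hDtype.symm)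
  let u (ρ : κ.ord.cof.ord.ToType) : κ.ord.ToType := e ρ
  have hu : Monotone u := fun ρ σ h => (OrderIso.ofRelIsoLT e).monotone h
  refine ⟨fun ρ => max ℵ₀ #(Iio (u ρ)), fun ρ => le_max_left _ _, fun ρ => max_lt ?_ ?_,
    fun m hm => ?_⟩
  · exact (isRegular_cof (isSuccLimit_ord hκ.aleph0_le)).aleph0_le.trans_lt hκ.cof_ord_lt
  · exact mk_Iio_ord_toType_lt _
  · obtain ⟨x, hx⟩ := exists_mk_Iio_eq (hκ.isSuccLimit.succ_lt hm)
    obtain ⟨y, hy, hxy⟩ := hD x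
    filter_upwards [eventually_ge_atTop (e.symm ⟨y, hy⟩)] with ρ hρ
    have hyρ : y ≤ u ρ := by simpa [u] using hu hρ
    exact lt_max_of_lt_right ((lt_succ m).trans_le (hx ▸ mk_le_mk_of_subset
      (Iio_subset_Iio (hxy.trans hyρ))))

theorem exists_isExactBound_of_isSingular (hκ : κ.IsSingular) :
    ∃ (f : (succ κ).ord.ToType → κ.ord.cof.ord.ToType → WithTop κ.ord.ToType)
      (F : κ.ord.cof.ord.ToType → WithTop κ.ord.ToType), IsExactBound κ atTop f F := by
  have hsucc : (succ κ).IsRegular := isRegular_succ hκ.aleph0_le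
  have hcof : κ.ord.cof.IsRegular := isRegular_cof (isSuccLimit_ord hκ.aleph0_le)
  have : NoMaxOrder (succ κ).ord.ToType := noMaxOrder hsucc.aleph0_le
  let _ := conditionallyCompleteLinearOrderBotToType hsucc.aleph0_le
  let _ := conditionallyCompleteLinearOrderBotToType hκ.aleph0_le
  have : Infinite κ.ord.cof.ord.ToType := by
    rw [infinite_iff, mk_ord_toType]
    exact hcof.aleph0_le
  obtain ⟨μ, hμ₀, hμκ, hμ⟩ := exists_tendsto_cardinals hκ
  obtain ⟨f, hf⟩ := exists_stronglyIncreasing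
    (fun α : (succ κ).ord.ToType => lt_succ_iff.1 (mk_Iio_ord_toType_lt α))
    (mk_withTop_ord_toType hκ.aleph0_le).ge hμ₀ hμκ hμ
  exact ⟨f, hf.exists_isExactBound hκ.isSuccLimit (by rw [mk_ord_toType]; exact hκ.cof_ord_lt)
    (by rw [Ordinal.cof_toType, hsucc.cof_ord]; exact le_succ κ)⟩

end SingularScale

section Decomposability

variable {S : Type u} {U : Ultrafilter S} {κ : Cardinal.{v}}

theorem decomposable_iff {W : Type v} (hW : #W = κ) :
    Decomposable U κ ↔ ∃ g : S → W, ∀ X : Set W, #X < κ → ∀ᶠ s in U, g s ∉ X := by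
  obtain ⟨e⟩ : Nonempty (κ.out ≃ W) := Cardinal.eq.1 (by rw [mk_out, hW])
  constructor
  · rintro ⟨f, hf⟩
    exact ⟨e ∘ f, fun X hX => Ultrafilter.compl_mem_iff_notMem.2
      (hf (e ⁻¹' X) (by rwa [mk_preimage_equiv]))⟩
  · rintro ⟨g, hg⟩
    refine ⟨e.symm ∘ g, fun X hX => Ultrafilter.compl_mem_iff_notMem.1 ?_⟩
    exact hg (e.symm ⁻¹' X) (by rwa [mk_preimage_equiv])

theorem Decomposable.exists_tendsto_atTop (h : Decomposable U κ) :
    ∃ g : S → κ.ord.ToType, Tendsto g U atTop := by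
  obtain ⟨g, hg⟩ := (decomposable_iff (mk_ord_toType κ)).1 h
  refine ⟨g, tendsto_atTop.2 fun x => ?_⟩
  exact (hg (Iio x) (mk_Iio_ord_toType_lt x)).mono fun s hs => not_lt.1 hs

/-- `(κ, #K)`-regularity of `U`: the sets `{s | α ∈ B s}`, for `α : K`, belong to `U`, and each
point `s` lies in fewer than `κ` of them. -/
def RegularOn (U : Ultrafilter S) (κ : Cardinal.{v}) (K : Type v) : Prop :=
  ∃ B : S → Set K, (∀ s, #(B s) < κ) ∧ ∀ α, ∀ᶠ s in U, α ∈ B s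

theorem decomposable_of_regularOn_aleph0 (hκ : ℵ₀ < κ) {W : Type v} (hW : #W = κ)
    (h : RegularOn U ℵ₀ W) : Decomposable U κ := by
  obtain ⟨B, hB, hmem⟩ := h
  have : Infinite W := infinite_iff.2 (hW ▸ hκ.le)
  let g (s : S) : Finset W := (lt_aleph0_iff_set_finite.1 (hB s)).toFinset
  refine (decomposable_iff ((mk_finset_of_infinite W).trans hW)).2 ⟨g, fun X hX => ?_⟩
  have hunion : #(⋃ F : X, (F.1 : Set W)) < κ :=
    (mk_iUnion_le_of_le (le_max_left ℵ₀ #X) (le_max_right _ _) fun F =>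
      (F.1.finite_toSet.lt_aleph0.le).trans (le_max_left _ _)).trans_lt (max_lt hκ hX)
  obtain ⟨γ, hγ⟩ : ∃ γ, γ ∉ ⋃ F : X, (F.1 : Set W) := by
    by_contra! h
    rw [eq_univ_of_forall h, mk_univ, hW] at hunion
    exact hunion.false
  filter_upwards [hmem γ] with s hs hsX
  exact hγ (mem_iUnion.2 ⟨⟨g s, hsX⟩, by simpa [g] using hs⟩)

theorem decomposable_of_regularOn_of_isExactBound {K L M : Type v} [LinearOrder K] [Nonempty K]
    [LinearOrder L] [Infinite L] [LinearOrder M] {f : K → L → M} {F : L → M} (hM : #M = κ)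
    (hL : #L < κ) (hF : IsExactBound κ atTop f F) {h : S → L} (hh : Tendsto h U atTop)
    (hR : RegularOn U κ K) : Decomposable U κ := by
  obtain ⟨B, hB, hmem⟩ := hR
  choose ρ hρ using fun s => eventually_atTop.1 (hF.eventually_lt_cof hL (hB s))
  let h' (s : S) : L := max (h s) (ρ s)
  have hh' : Tendsto h' U atTop := tendsto_atTop_mono (fun s => le_max_left _ _) hh
  have hcap (s : S) : ∃ b : Iio (F (h' s)), ∀ α ∈ B s, f α (h' s) < F (h' s) → f α (h' s) < b := by
    obtain ⟨b, hb⟩ := exists_forall_lt_of_mk_lt_cof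
      ((mk_le_mk_of_subset (sep_subset (B s) _)).trans_lt (hρ s (h' s) (le_max_right _ _)))
      fun α : {α ∈ B s | f α (h' s) < F (h' s)} => (⟨f α (h' s), α.2.2⟩ : Iio (F (h' s)))
    exact ⟨b, fun α hα hlt => hb ⟨α, hα, hlt⟩⟩
  choose g hg using hcap
  refine (decomposable_iff hM).2 ⟨fun s => g s, fun X hX => ?_⟩
  obtain ⟨α, hα⟩ := (hF.eventually_le X hX).exists
  filter_upwards [hmem α, hh'.eventually hα, hh'.eventually (hF.eventually_lt α)]
    with s hαs hle hlt hgX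
  exact (hle _ hgX (hg s α hαs hlt).le).not_gt (g s).2

section Regularity

variable {K : Type v} [LinearOrder K]

theorem regularOn_of_eventually_nonempty_inter_Ico [WellFoundedLT K]
    (hK : ∀ j : K, #(Iio j) < cof K) {A : S → Set K} (hA : ∀ s, #(A s) < κ)
    (h : ∀ α, ∃ β, ∀ᶠ s in U, (A s ∩ Ico α β).Nonempty) : RegularOn U κ K := by
  choose b hb using h
  obtain ⟨e, -, he⟩ := exists_seq_apply_lt hK IsCofinal.univ b
  refine ⟨fun s => {i | (A s ∩ Ico (e i) (b (e i))).Nonempty}, fun s => ?_, fun i => hb (e i)⟩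
  choose c hcA hc using fun i : {i | (A s ∩ Ico (e i) (b (e i))).Nonempty} => i.2
  have hlt (i j) (hij : i.1 < j.1) : c i < c j := (hc i).2.trans ((he _ _ hij).trans_le (hc j).1)
  have hinj : Function.Injective fun i => (⟨c i, hcA i⟩ : A s) :=
    (StrictMono.injective (f := c) fun i j => hlt i j).codRestrict hcA
  exact (mk_le_of_injective hinj).trans_lt (hA s)

theorem exists_eventually_disjoint_Ico_of_not_regularOn [WellFoundedLT K]
    (hK : ∀ j : K, #(Iio j) < cof K) [NoMaxOrder K] (hU : ¬RegularOn U κ K) {A : S → Set K}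
    (hA : ∀ s, #(A s) < κ) (γ : K) : ∃ α > γ, ∀ β, ∀ᶠ s in U, Disjoint (A s) (Ico α β) := by
  by_contra! h
  refine hU (regularOn_of_eventually_nonempty_inter_Ico hK hA fun α => ?_)
  obtain ⟨α', hα'⟩ := exists_gt (max γ α)
  obtain ⟨β, hβ⟩ := h α' ((le_max_left _ _).trans_lt hα')
  refine ⟨β, hβ.mono fun s hs => ?_⟩
  exact (not_disjoint_iff_nonempty_inter.1 hs).mono
    (inter_subset_inter_right _ (Ico_subset_Ico_left ((le_max_right _ _).trans_lt hα').le))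

theorem cof_lt_of_mk_le_of_isSingular [WellFoundedLT K] (hκ : κ.IsSingular) (hK : #K ≤ κ) :
    cof K < κ := by
  refine ((cof_le_cardinalMk K).trans hK).lt_of_ne fun h => hκ.cof_ord_ne ?_
  rw [← h, Order.cof_ord_cof]

theorem regularOn_of_least_tendsto [WellFoundedLT K] [NoMaxOrder K]
    (hK : ∀ j : K, #(Iio j) < cof K)
    (hcof : ∀ j : K, cof (Iio j) < κ) {δ : S → K} (hδ : Tendsto δ U atTop)
    (hleast : ∀ g : S → K, (∀ᶠ s in U, g s < δ s) → ¬Tendsto g U atTop) : RegularOn U κ K := by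
  choose c hcδ hc hcofinal using fun s => exists_isCofinal_below (δ s)
  refine regularOn_of_eventually_nonempty_inter_Ico hK (A := c)
    (fun s => (hc s).trans_lt (hcof _)) fun α => ?_
  have hg (s : S) : ∃ y, α < δ s → y ∈ c s ∧ α ≤ y := by
    by_cases h : α < δ s
    · obtain ⟨y, hy⟩ := hcofinal s α h
      exact ⟨y, fun _ => hy⟩
    · exact ⟨α, fun h' => absurd h' h⟩
  choose g hg using hg
  have hαδ : ∀ᶠ s in U, α < δ s := hδ.eventually (eventually_gt_atTop α)
  obtain ⟨β, hβ⟩ : ∃ β, ∀ᶠ s in U, g s < β := by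
    simpa only [tendsto_atTop, not_forall, ← Ultrafilter.eventually_not, not_le]
      using hleast g (hαδ.mono fun s hs => hcδ s (hg s hs).1)
  exact ⟨β, hαδ.mp (hβ.mono fun s hβ hα => ⟨g s, (hg s hα).1, (hg s hα).2, hβ⟩)⟩

theorem exists_rank_of_mk_le {X : Type v} {D : Set X} (hκ : ℵ₀ ≤ κ) (hD : #D ≤ κ) :
    ∃ r : X → κ.ord.ToType, ∀ i, #{x ∈ D | r x ≤ i} < κ := by
  have : Nonempty κ.ord.ToType := mk_ne_zero_iff.1 (by
    rw [mk_ord_toType]; exact (aleph0_pos.trans_le hκ).ne')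
  obtain ⟨φ⟩ : Nonempty (D ↪ κ.ord.ToType) := by rwa [← mk_ord_toType κ] at hD
  let r := Function.extend Subtype.val φ fun _ => Classical.arbitrary _
  refine ⟨r, fun i => ?_⟩
  have hIic : #(Iic i) < κ := by
    rw [← Iio_insert]
    exact mk_insert_le.trans_lt (add_lt_of_lt hκ (mk_Iio_ord_toType_lt i)
      (one_lt_aleph0.trans_le hκ))
  have hsub : {x ∈ D | r x ≤ i} ⊆ Subtype.val '' (φ ⁻¹' Iic i) := fun x ⟨hx, hle⟩ =>
    ⟨⟨x, hx⟩, (Subtype.val_injective.extend_apply φ _ ⟨x, hx⟩).symm.trans_le hle, rfl⟩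
  exact (mk_le_mk_of_subset hsub).trans_lt (mk_image_le.trans_lt
    ((mk_preimage_of_injective _ _ φ.injective).trans_lt hIic))

variable [WellFoundedLT K]

theorem finite_of_strictAntiOn {N : Set K} {g : K → K} (hg : StrictAntiOn g N) : N.Finite := by
  have hanti : StrictAnti fun i : N => g i := fun i j hij => hg i.2 j.2 hij
  have : WellFoundedGT N := hanti.wellFoundedGT
  exact Finite.of_wellFoundedLT_wellFoundedGT N

variable {I : Type v} [LinearOrder I]

/-- The first point of `[β, d)` at which `r` is smaller than everywhere on `[α, β)`, and `d` if
there is none. -/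
noncomputable def nextRecord (d : K) (r : K → I) (α β : K) : K :=
  wellFounded_lt.min {y | y = d ∨ β ≤ y ∧ ∀ x ∈ Ico α β, r y < r x} ⟨d, Or.inl rfl⟩

section NextRecord

variable {d y α α' β β' : K} {r : K → I}

theorem isLeast_nextRecord :
    IsLeast {y | y = d ∨ β ≤ y ∧ ∀ x ∈ Ico α β, r y < r x} (nextRecord d r α β) :=
  ⟨WellFounded.min_mem _ _ _, fun _ hy => WellFounded.min_le _ hy⟩

theorem nextRecord_le : nextRecord d r α β ≤ d :=
  isLeast_nextRecord.2 (Or.inl rfl)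

theorem nextRecord_le_of_forall_lt (hy : β ≤ y) (hr : ∀ x ∈ Ico α β, r y < r x) :
    nextRecord d r α β ≤ y :=
  isLeast_nextRecord.2 (Or.inr ⟨hy, hr⟩)

theorem nextRecord_anti_left (h : α ≤ α') : nextRecord d r α' β ≤ nextRecord d r α β := by
  rcases (isLeast_nextRecord (d := d) (r := r) (α := α) (β := β)).1 with heq | ⟨hβ, hr⟩
  · exact nextRecord_le.trans_eq heq.symm
  · exact nextRecord_le_of_forall_lt hβ fun x hx => hr x (Ico_subset_Ico_left h hx)

theorem nextRecord_mono_right (h : β ≤ β') : nextRecord d r α β ≤ nextRecord d r α β' := by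
  rcases (isLeast_nextRecord (d := d) (r := r) (α := α) (β := β')).1 with heq | ⟨hβ, hr⟩
  · exact nextRecord_le.trans_eq heq.symm
  · exact nextRecord_le_of_forall_lt (h.trans hβ) fun x hx => hr x (Ico_subset_Ico_right h hx)

end NextRecord

section Records

variable [NoMaxOrder K] {δ : S → K} {r : S → K → I}

theorem exists_tendsto_nextRecord (hK : ∀ j : K, #(Iio j) < cof K) (hU : ¬RegularOn U κ K)
    (hδ : Tendsto δ U atTop) (hr : ∀ s i, #{x ∈ Iio (δ s) | r s x ≤ i} < κ) (α : K) :
    ∃ α' > α, Tendsto (fun s => nextRecord (δ s) (r s) α α') U atTop := by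
  obtain ⟨α', hα', hdisj⟩ := exists_eventually_disjoint_Ico_of_not_regularOn hK hU
    (fun s => hr s (r s α)) α
  refine ⟨α', hα', tendsto_atTop.2 fun β => ?_⟩
  filter_upwards [hdisj β, hδ.eventually_ge_atTop β] with s hs hβ
  by_contra! hlt
  obtain heq | ⟨hle, hrec⟩ :=
    (isLeast_nextRecord (d := δ s) (r := r s) (α := α) (β := α')).1
  · exact hlt.not_ge (hβ.trans_eq heq.symm)
  · exact disjoint_left.1 hs
      ⟨hlt.trans_le hβ, (hrec α (left_mem_Ico.2 hα')).le⟩ ⟨hle, hlt⟩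

theorem exists_eventually_nextRecord_lt (hK : ∀ j : K, #(Iio j) < cof K) (hU : ¬RegularOn U κ K)
    (hδ : Tendsto δ U atTop) (hr : ∀ s i, #{x ∈ Iio (δ s) | r s x ≤ i} < κ)
    (hleast : ∀ δ : S → K, Tendsto δ U atTop →
      ∃ g : S → K, (∀ᶠ s in U, g s < δ s) ∧ Tendsto g U atTop) (α : K) :
    ∃ b, ∀ t ≥ b, ∀ᶠ s in U, nextRecord (δ s) (r s) b t < nextRecord (δ s) (r s) α t := by
  obtain ⟨α', -, hα'⟩ := exists_tendsto_nextRecord hK hU hδ hr α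
  obtain ⟨g, hglt, hg⟩ := hleast _ hα'
  obtain ⟨b, hb, hdisj⟩ := exists_eventually_disjoint_Ico_of_not_regularOn hK hU
    (fun s => hr s (r s (g s))) α'
  refine ⟨b, fun t ht => ?_⟩
  filter_upwards [hglt, hg.eventually_ge_atTop t, hdisj t] with s hgs htg hs
  have hgδ : g s < δ s := hgs.trans_le nextRecord_le
  calc nextRecord (δ s) (r s) b t ≤ g s := nextRecord_le_of_forall_lt htg fun x hx =>
        not_le.1 fun hle => disjoint_left.1 hs ⟨hx.2.trans (htg.trans_lt hgδ), hle⟩ hx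
    _ < nextRecord (δ s) (r s) α α' := hgs
    _ ≤ nextRecord (δ s) (r s) α t := nextRecord_mono_right (hb.le.trans ht)

theorem regularOn_aleph0_of_not_regularOn (hκ : ℵ₀ ≤ κ) (hK : ∀ j : K, #(Iio j) < cof K)
    (hKκ : ∀ j : K, #(Iio j) ≤ κ) (hU : ¬RegularOn U κ K) (hδ : Tendsto δ U atTop)
    (hleast : ∀ δ : S → K, Tendsto δ U atTop →
      ∃ g : S → K, (∀ᶠ s in U, g s < δ s) ∧ Tendsto g U atTop) (o : K) :
    RegularOn U ℵ₀ (Iio o) := by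
  choose r hr using fun s => exists_rank_of_mk_le hκ (hKκ (δ s))
  choose b hb using exists_eventually_nextRecord_lt hK hU hδ hr hleast
  obtain ⟨e, -, he⟩ := exists_seq_apply_lt hK IsCofinal.univ b
  let a (s : S) (α : K) : K := nextRecord (δ s) (r s) α (e o)
  refine ⟨fun s => {i | a s (b (e i)) < a s (e i)}, fun s => ?_,
    fun i => hb (e i) (e o) (he i o i.2).le⟩
  have hanti : StrictAntiOn (fun i => a s (e i)) {i | a s (b (e i)) < a s (e i)} :=
    fun i hi j _ hij => (nextRecord_anti_left (he i j hij).le).trans_lt hi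
  exact ((finite_of_strictAntiOn hanti).preimage Subtype.val_injective.injOn).lt_aleph0

end Records

end Regularity

theorem regularOn_or_decomposable_of_isSingular (hκ : κ.IsSingular)
    (h : Decomposable U (succ κ)) :
    RegularOn U κ (succ κ).ord.ToType ∨ Decomposable U κ := by
  have hsucc : (succ κ).IsRegular := isRegular_succ hκ.aleph0_le
  let K := (succ κ).ord.ToType
  have : NoMaxOrder K := noMaxOrder hsucc.aleph0_le
  have hKκ (j : K) : #(Iio j) ≤ κ := lt_succ_iff.1 (mk_Iio_ord_toType_lt j)
  have hK (j : K) : #(Iio j) < cof K := by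
    rw [Ordinal.cof_toType, hsucc.cof_ord]
    exact mk_Iio_ord_toType_lt j
  obtain ⟨δ, hδ⟩ := h.exists_tendsto_atTop
  obtain ⟨o, ho⟩ : ∃ o : K, #(Iio o) = κ := exists_mk_Iio_eq (lt_succ κ)
  have hcofκ : ℵ₀ ≤ κ.ord.cof := (isRegular_cof (isSuccLimit_ord hκ.aleph0_le)).aleph0_le
  refine or_iff_not_imp_left.2 fun hU =>
    decomposable_of_regularOn_aleph0 (hcofκ.trans_lt hκ.cof_ord_lt) ho
      (regularOn_aleph0_of_not_regularOn hκ.aleph0_le hK hKκ hU hδ (fun δ hδ => ?_) o)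
  by_contra! hleast
  exact hU (regularOn_of_least_tendsto hK
    (fun j => cof_lt_of_mk_le_of_isSingular hκ (hKκ j)) hδ hleast)

end Decomposability

end

/-- For singular `κ`: a `κ⁺`-decomposable and `cf(κ)`-decomposable ultrafilter
is `κ`-decomposable. -/
theorem stmt12 {S : Type u} (κ : Cardinal.{v}) (hκ : ℵ₀ ≤ κ)
    (hsing : κ.ord.cof < κ) (U : Ultrafilter S)
    (h1 : Decomposable U (Order.succ κ)) (h2 : Decomposable U κ.ord.cof) :
    Decomposable U κ := by
  have hκ' : κ.IsSingular := ⟨hκ, hsing.ne⟩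
  rcases regularOn_or_decomposable_of_isSingular hκ' h1 with hU | hU
  · have : Nonempty (Order.succ κ).ord.ToType := (exists_mk_Iio_eq (Order.lt_succ κ)).nonempty
    have : Infinite κ.ord.cof.ord.ToType := by
      simpa [infinite_iff] using (isRegular_cof (isSuccLimit_ord hκ)).aleph0_le
    obtain ⟨f, F, hF⟩ := exists_isExactBound_of_isSingular hκ'
    obtain ⟨h, hh⟩ := h2.exists_tendsto_atTop
    exact decomposable_of_regularOn_of_isExactBound (mk_withTop_ord_toType hκ)
      (by rwa [mk_ord_toType]) hF hh hU
  · exact hU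
end

section
/- If κ is a singular cardinal of countable cofinality, then u(κ) ≤ u(κ⁺). -/
open Cardinal Set

universe u v

/-!
Let `U` be a uniform ultrafilter over `κ⁺` of minimal character. If `U` is countably complete, its
character exceeds the continuum, and its product with a nonprincipal ultrafilter over `ℕ` is an
`ω`-decomposable ultrafilter of no larger character that projects to `U`. Either way, some
`κ⁺`-decomposable and `ω`-decomposable ultrafilter has character at most `u(κ⁺)`. Being
`κ⁺`-decomposable with `κ` singular, it is `l`-decomposable for cofinally many `l ≤ κ`; since
`cf κ = ω`, countably many decompositions witnessing this, joined into finite lists along an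
`ω`-decomposition, form a `κ`-decomposition, which maps the ultrafilter to a uniform one over `κ`.

For the cofinality of such `l`, suppose that an ultrafilter over `κ⁺` containing all final segments
is `l`-indecomposable whenever `μ < l ≤ κ`, where `cf κ ≤ μ < κ`. It has a weakly normal image
which also contains all final segments. Modulo that image, `cf α` tends to `κ` and lies in a set
`R` of at most `μ` regular cardinals, all greater than `μ`, and weak normality yields functions
`x β ∈ ∏ R` for `β < κ⁺` which are unbounded modulo the distribution of `cf α`.
Choose `f ξ ∈ ∏ R` dominating all `x β` with `β ≤ ξ` modulo bounded sets. A diagonalization of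
length `μ⁺` produces `G ∈ ∏ R` such that every `g ∈ ∏ R` satisfies `g < f ξ` on `{G < f ξ}` for
cofinally many `ξ`. Some `x β` exceeds `G` on an unbounded set, and covering `κ⁺` by sets `A α` of
size `cf α` gives `g ∈ ∏ R` exceeding each `f ξ` cofinally often on that set: a contradiction.
-/

namespace UltrafilterNumber

open Filter Order
open scoped Ordinal

section Decomposability

variable {S : Type u} {U : Ultrafilter S}

theorem decomposable_mk_iff {A : Type v} :
    Decomposable U #A ↔ ∃ f : S → A, ∀ X : Set A, #X < #A → f ⁻¹' X ∉ U := by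
  obtain ⟨e⟩ := Cardinal.eq.1 (mk_out #A)
  constructor
  · rintro ⟨f, hf⟩
    exact ⟨e ∘ f, fun X hX ↦ hf (e ⁻¹' X) (by rwa [mk_preimage_equiv])⟩
  · rintro ⟨f, hf⟩
    exact ⟨e.symm ∘ f, fun X hX ↦ hf (e.symm ⁻¹' X) (by rwa [mk_preimage_equiv])⟩

theorem decomposable_aleph0_iff :
    Decomposable U aleph0.{0} ↔ ∃ g : S → ℕ, Tendsto g U atTop := by
  rw [← mk_nat, decomposable_mk_iff]
  refine exists_congr fun g ↦ ?_
  rw [← Nat.cofinite_eq_atTop, tendsto_def, compl_surjective.forall]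
  simp only [mem_cofinite, mk_nat, lt_aleph0_iff_set_finite, preimage_compl,
    Ultrafilter.mem_coe, Ultrafilter.compl_mem_iff_notMem, not_not]

theorem decomposable_of_map {A : Type*} {f : S → A} {l : Cardinal.{v}}
    (h : Decomposable (U.map f) l) : Decomposable U l :=
  let ⟨g, hg⟩ := h
  ⟨g ∘ f, hg⟩

theorem decomposable_mk_of_uniform (hU : Uniform U) : Decomposable U #S :=
  decomposable_mk_iff.2 ⟨id, fun X hX hXU ↦ hX.ne (hU X hXU)⟩

end Decomposability

section Character

variable {S : Type u} {U : Ultrafilter S} {κ : Cardinal.{u}}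

theorem charU_le_of_hasBasis {ι : Type u} {p : ι → Prop} {s : ι → Set S}
    (h : (U : Filter S).HasBasis p s) : charU U ≤ #{i // p i} := by
  refine le_trans (csInf_le' ⟨range fun i : {i // p i} ↦ s i, rfl, ?_, fun Y hY ↦ ?_⟩) mk_range_le
  · rintro _ ⟨i, rfl⟩
    exact h.mem_of_mem i.2
  · obtain ⟨i, hi, hiY⟩ := h.mem_iff.1 hY
    exact ⟨s i, ⟨⟨i, hi⟩, rfl⟩, hiY⟩

theorem exists_hasBasis_charU (U : Ultrafilter S) :
    ∃ B : Set (Set S), #B = charU U ∧ (U : Filter S).HasBasis (· ∈ B) id := by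
  obtain ⟨B, hB, hBU, hUB⟩ : charU U ∈ {c | ∃ B : Set (Set S), #B = c ∧
      (∀ X ∈ B, X ∈ U) ∧ ∀ Y ∈ U, ∃ X ∈ B, X ⊆ Y} :=
    csInf_mem ⟨_, {X | X ∈ U}, rfl, fun _ ↦ id, fun Y hY ↦ ⟨Y, hY, Subset.rfl⟩⟩
  exact ⟨B, hB, ⟨fun Y ↦ ⟨hUB Y, fun ⟨X, hX, hXY⟩ ↦ mem_of_superset (hBU X hX) hXY⟩⟩⟩

theorem charU_map_le {A : Type u} (f : S → A) : charU (U.map f) ≤ charU U := by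
  obtain ⟨B, hB, hBU⟩ := exists_hasBasis_charU U
  exact (charU_le_of_hasBasis (hBU.map f)).trans hB.le

theorem mk_le_charU (hU : Uniform U) : #S ≤ charU U := by
  obtain ⟨B, hB, hBU⟩ := exists_hasBasis_charU U
  choose p hp using fun X : B ↦ Ultrafilter.nonempty_of_mem (hBU.mem_of_mem X.2)
  suffices h : range p ∈ U by
    rw [← hU _ h, ← hB]
    exact mk_range_le
  by_contra h
  obtain ⟨X, hX, hXp⟩ := hBU.mem_iff.1 (Ultrafilter.compl_mem_iff_notMem.2 h)
  exact hXp (hp ⟨X, hX⟩) (mem_range_self _)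

theorem uNumber_le_charU (h : Decomposable U κ) : uNumber κ ≤ charU U := by
  obtain ⟨f, hf⟩ := h
  have hUf : Uniform (U.map f) := fun X hX ↦
    (mk_set_le X).eq_of_not_lt fun hlt ↦ hf X (by rwa [mk_out] at hlt) hX
  exact (csInf_le' ⟨U.map f, hUf, rfl⟩ : uNumber κ ≤ _).trans (charU_map_le f)

theorem exists_uniform (hκ : κ.IsRegular) : ∃ U : Ultrafilter κ.out, Uniform U := by
  have : (cocardinal κ.out hκ).NeBot := by
    rw [neBot_iff, Ne, ← empty_mem_iff_bot, mem_cocardinal, compl_empty, mk_univ, mk_out]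
    exact lt_irrefl κ
  refine ⟨.of (cocardinal κ.out hκ), fun X hX ↦ (mk_set_le X).eq_of_not_lt fun hlt ↦ ?_⟩
  rw [mk_out] at hlt
  exact Ultrafilter.compl_notMem_iff.2 hX
    (Ultrafilter.of_le _ (compl_mem_cocardinal_of_card_lt hlt))

theorem exists_uniform_charU_eq_uNumber (hκ : κ.IsRegular) :
    ∃ U : Ultrafilter κ.out, Uniform U ∧ charU U = uNumber κ :=
  let ⟨U, hU⟩ := exists_uniform hκ
  csInf_mem (s := {c | ∃ U : Ultrafilter κ.out, Uniform U ∧ charU U = c}) ⟨_, U, hU, rfl⟩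

end Character

section CountablyComplete

variable {S : Type u} {U : Ultrafilter S}

theorem countableInterFilter_of_not_decomposable (h : ¬ Decomposable U aleph0.{0}) :
    CountableInterFilter (U : Filter S) := by
  contrapose! h
  obtain ⟨s, hs, hsU⟩ : ∃ s : ℕ → Set S, (∀ n, s n ∈ U) ∧ ⋂ n, s n ∉ U := by
    contrapose! h
    refine ⟨fun 𝒮 h𝒮 hU ↦ ?_⟩
    rcases 𝒮.eq_empty_or_nonempty with rfl | hne
    · simp
    · obtain ⟨s, rfl⟩ := h𝒮.exists_eq_range hne
      exact h s fun n ↦ hU _ (mem_range_self n)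
  refine decomposable_aleph0_iff.2 ⟨fun a ↦ sInf {n | a ∉ s n}, tendsto_atTop.2 fun n ↦ ?_⟩
  have hlt : ∀ᶠ a in U, ∀ i ∈ Iio n, a ∈ s i :=
    (eventually_all_finite (finite_Iio n)).2 fun i _ ↦ hs i
  filter_upwards [hlt, Ultrafilter.compl_mem_iff_notMem.2 hsU] with a ha hcompl
  have hne : {n | a ∉ s n}.Nonempty := by simpa [Set.Nonempty] using hcompl
  exact le_of_not_gt fun hlt ↦ Nat.sInf_mem hne (ha _ hlt)

theorem exists_ultrafilter_eq_prod {ι : Type*} [Countable ι] (H : Ultrafilter ι)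
    [CountableInterFilter (U : Filter S)] :
    ∃ V : Ultrafilter (ι × S), (V : Filter (ι × S)) = (H : Filter ι) ×ˢ (U : Filter S) := by
  refine ⟨H.bind fun i ↦ U.map (Prod.mk i), le_antisymm curry_le_prod fun Y hY ↦ ?_⟩
  have hdec : ∀ᶠ a in U, ∀ i, (∀ᶠ b in U, (i, b) ∈ Y) → (i, a) ∈ Y := by
    refine eventually_countable_forall.2 fun i ↦ ?_
    by_cases h : ∀ᶠ b in U, (i, b) ∈ Y
    · exact h.mono fun _ ha _ ↦ ha
    · exact .of_forall fun _ h' ↦ absurd h' h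
  exact mem_of_superset (prod_mem_prod hY hdec) fun p hp ↦ hp.2 p.1 hp.1

theorem continuum_lt_mk [Nontrivial S] (hU : Uniform U) [CountableInterFilter (U : Filter S)] :
    𝔠 < #S := by
  by_contra! h
  obtain ⟨j⟩ : Nonempty (S ↪ Set ℕ) := by
    rw [← lift_mk_le', mk_set_nat]
    simpa using h
  have hconst : ∀ᶠ a in U, ∀ n, n ∈ j a ↔ ∀ᶠ b in U, n ∈ j b := by
    refine eventually_countable_forall.2 fun n ↦ ?_
    by_cases hn : ∀ᶠ b in U, n ∈ j b
    · simp only [hn, iff_true]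
    · simpa only [hn, iff_false] using Ultrafilter.eventually_not.2 hn
  have hsub : {a | ∀ n, n ∈ j a ↔ ∀ᶠ b in U, n ∈ j b}.Subsingleton := fun a ha b hb ↦
    j.injective (Set.ext fun n ↦ (ha n).trans (hb n).symm)
  have hone : #S ≤ 1 := (hU _ hconst).symm.trans_le (mk_le_one_iff_set_subsingleton.2 hsub)
  exact (one_lt_iff_nontrivial.2 ‹_›).not_ge hone

theorem exists_decomposable_aleph0_map_snd_eq [Nontrivial S] (hU : Uniform U) :
    ∃ V : Ultrafilter (ℕ × S),
      V.map Prod.snd = U ∧ Decomposable V aleph0.{0} ∧ charU V ≤ charU U := by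
  by_cases hω : Decomposable U aleph0.{0}
  · exact ⟨U.map (Prod.mk 0), U.map_map .., decomposable_of_map (f := Prod.snd) hω, charU_map_le _⟩
  have := countableInterFilter_of_not_decomposable hω
  obtain ⟨V, hV⟩ := exists_ultrafilter_eq_prod (U := U) (hyperfilter ℕ)
  refine ⟨V, Ultrafilter.coe_injective ?_, decomposable_aleph0_iff.2 ⟨Prod.fst, ?_⟩, ?_⟩
  · rw [Ultrafilter.coe_map, hV]
    exact map_snd_prod _ _
  · rw [hV]
    exact tendsto_fst.mono_right Nat.hyperfilter_le_atTop
  · obtain ⟨B, hB, hBU⟩ := exists_hasBasis_charU U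
    have hbasis := (hyperfilter ℕ : Filter ℕ).basis_sets.prod hBU
    rw [← hV] at hbasis
    have h𝔠 : 𝔠 ≤ charU U := (continuum_lt_mk hU).le.trans (mk_le_charU hU)
    calc charU V ≤ #(Set ℕ × B) :=
          (charU_le_of_hasBasis hbasis).trans (mk_le_of_injective
            (f := fun p ↦ (p.1.1, ⟨p.1.2, p.2.2⟩)) fun p q hpq ↦ by aesop)
      _ = 𝔠 * charU U := by simp [hB]
      _ = charU U := mul_eq_right (aleph0_le_continuum.trans h𝔠) h𝔠 continuum_ne_zero

end CountablyComplete

section WellOrder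

variable {I A : Type*}

theorem exists_forall_lt_rel [LinearOrder I] [WellFoundedLT I] {r : A → A → Prop}
    (h : ∀ (i : I) (g : Iio i → A), ∃ a, ∀ k, r (g k) a) :
    ∃ f : I → A, ∀ k i, k < i → r (f k) (f i) := by
  choose next hnext using h
  let f : I → A := (wellFounded_lt (α := I)).fix fun i ih ↦ next i fun k ↦ ih k k.2
  have hf (i : I) : f i = next i fun k ↦ f k := wellFounded_lt.fix_eq _ _
  exact ⟨f, fun k i hki ↦ by simpa only [← hf i] using hnext i (fun k ↦ f k) ⟨k, hki⟩⟩

theorem eventuallyConst_atTop_of_antitone [SemilatticeSup I] [Nonempty I] [LinearOrder A]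
    [WellFoundedLT A] {f : I → A} (hf : Antitone f) : EventuallyConst f atTop := by
  obtain ⟨_, ⟨i, rfl⟩, hmin⟩ := wellFounded_lt.has_min (range f) (range_nonempty f)
  exact eventuallyConst_atTop.2 ⟨i, fun j hij ↦ (hf hij).antisymm (not_lt.1 (hmin _ ⟨j, rfl⟩))⟩

end WellOrder

/-- The cardinal successor `κ⁺` as a well-ordered type. -/
abbrev SuccType (κ : Cardinal.{u}) : Type u := (succ κ).ord.ToType

namespace SuccType

variable {κ : Cardinal.{u}}

theorem mk_Iio_le (a : SuccType κ) : #(Iio a) ≤ κ := by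
  simpa [lt_succ_iff] using mk_Iio_lt a

theorem exists_forall_lt (hκ : ℵ₀ ≤ κ) {s : Set (SuccType κ)} (hs : #s ≤ κ) :
    ∃ b, ∀ a ∈ s, a < b := by
  refine not_isCofinal_iff.1 fun hcof ↦ (cof_le hcof).not_gt ?_
  rwa [Ordinal.cof_toType, (isRegular_succ hκ).cof_ord, lt_succ_iff]

theorem exists_forall_apply_lt (hκ : ℵ₀ ≤ κ) {ι : Type u} (hι : #ι ≤ κ) (f : ι → SuccType κ) :
    ∃ b, ∀ i, f i < b :=
  (exists_forall_lt hκ (mk_range_le.trans hι)).imp fun _ hb i ↦ hb _ (mem_range_self i)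

theorem nonempty : Nonempty (SuccType κ) := by
  simp

theorem noMaxOrder (hκ : ℵ₀ ≤ κ) : NoMaxOrder (SuccType κ) :=
  Cardinal.noMaxOrder (hκ.trans (le_succ κ))

theorem mk_Iic_le (hκ : ℵ₀ ≤ κ) (a : SuccType κ) : #(Iic a) ≤ κ := by
  have := noMaxOrder hκ
  obtain ⟨b, hab⟩ := exists_gt a
  exact (mk_le_mk_of_subset (Iic_subset_Iio.2 hab)).trans (mk_Iio_le b)

theorem eventuallyConst_of_monotone (hκ : ℵ₀ ≤ κ) {A : Type u} [LinearOrder A]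
    {f : SuccType κ → A} (hf : Monotone f) (hcard : #(range f) ≤ κ) :
    EventuallyConst f atTop := by
  have : Nonempty (SuccType κ) := nonempty
  refine .of_not_isCofinal_rangeSplitting hf (not_isCofinal_iff.2 ?_)
  exact exists_forall_lt hκ (mk_range_le.trans hcard)

theorem exists_seq_apply_lt (hκ : ℵ₀ ≤ κ) {I : Type u} [LinearOrder I] [WellFoundedLT I]
    (hI : ∀ i : I, #(Iio i) ≤ κ) (b : SuccType κ → SuccType κ) :
    ∃ β : I → SuccType κ, ∀ k i, k < i → b (β k) < β i :=
  exists_forall_lt_rel (r := (b · < ·)) fun i g ↦ exists_forall_apply_lt hκ (hI i) fun k ↦ b (g k)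

end SuccType

/-- Every function into a set of size at most `κ` takes `U`-almost all of its values in a set of
size at most `μ`. For `μ < κ` this says that `U` is `l`-indecomposable for all `μ < l ≤ κ`. -/
def HasSmallRanges {D : Type u} (U : Ultrafilter D) (μ κ : Cardinal.{u}) : Prop :=
  ∀ ⦃A : Type u⦄, #A ≤ κ → ∀ F : D → A, ∃ X : Set A, #X ≤ μ ∧ ∀ᶠ a in U, F a ∈ X

theorem hasSmallRanges_of_not_decomposable {D : Type u} {U : Ultrafilter D} {μ κ : Cardinal.{u}}
    (h : ∀ l ∈ Ioc μ κ, ¬ Decomposable U l) : HasSmallRanges U μ κ := by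
  intro A hA F
  obtain ⟨X, hX⟩ := exists_minimalFor_of_wellFoundedLT (fun X : Set A ↦ ∀ᶠ a in U, F a ∈ X)
    (fun X ↦ #X) ⟨univ, univ_mem⟩
  refine ⟨X, not_lt.1 fun hμX ↦ h #X ⟨hμX, (mk_set_le X).trans hA⟩ ?_, hX.prop⟩
  have : Nonempty X := let ⟨a, ha⟩ := hX.prop.exists; ⟨⟨F a, ha⟩⟩
  choose! f hf using fun a (ha : F a ∈ X) ↦ (⟨⟨F a, ha⟩, rfl⟩ : ∃ x : X, x = F a)
  refine decomposable_mk_iff.2 ⟨f, fun Y hY hfY ↦ hY.not_ge ?_⟩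
  have hFY : ∀ᶠ a in U, F a ∈ Subtype.val '' Y := by
    filter_upwards [hX.prop, hfY] with a ha haY using ⟨f a, haY, hf a ha⟩
  exact (hX.le hFY).trans mk_image_le

namespace HasSmallRanges

variable {D : Type u} {U : Ultrafilter D} {μ κ : Cardinal.{u}}

theorem mono {μ' : Cardinal.{u}} (h : HasSmallRanges U μ κ) (hμ : μ ≤ μ') :
    HasSmallRanges U μ' κ := fun _ hA F ↦
  let ⟨X, hX, hXU⟩ := h hA F
  ⟨X, hX.trans hμ, hXU⟩

theorem map {E : Type u} (h : HasSmallRanges U μ κ) (φ : D → E) : HasSmallRanges (U.map φ) μ κ :=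
  fun _ hA F ↦ h hA (F ∘ φ)

theorem exists_eventually_lt (h : HasSmallRanges U μ κ) (hμ : ℵ₀ ≤ μ) (hμκ : μ < κ)
    (F : D → SuccType μ) : ∃ b, ∀ᶠ a in U, F a < b := by
  obtain ⟨X, hX, hXU⟩ := h (by simpa using succ_le_of_lt hμκ) F
  obtain ⟨b, hb⟩ := SuccType.exists_forall_lt hμ hX
  exact ⟨b, hXU.mono fun a ha ↦ hb _ ha⟩

theorem exists_eventually_notMem (h : HasSmallRanges U μ κ) (hμ : ℵ₀ ≤ μ) (hμκ : μ < κ)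
    {A : D → Set (SuccType μ)} (hA : ∀ᶠ a in U, #(A a) ≤ μ) : ∃ b, ∀ᶠ a in U, b ∉ A a := by
  have : Nonempty (SuccType μ) := SuccType.nonempty
  choose! F hF using fun a (ha : #(A a) ≤ μ) ↦ SuccType.exists_forall_lt hμ ha
  obtain ⟨b, hb⟩ := h.exists_eventually_lt hμ hμκ F
  exact ⟨b, by filter_upwards [hA, hb] with a hAa hba hmem using (hF a hAa b hmem).not_gt hba⟩

theorem exists_lt_eventuallyEq (h : HasSmallRanges U μ κ) (hμ : ℵ₀ ≤ μ) (hμκ : μ < κ)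
    {B : Type*} {p : SuccType μ → D → B} (hp : ∀ a, EventuallyConst (p · a) atTop) :
    ∃ i j, i < j ∧ p i =ᶠ[U] p j := by
  have : Nonempty (SuccType μ) := SuccType.nonempty
  have := SuccType.noMaxOrder hμ
  choose F hF using fun a ↦ eventuallyConst_atTop.1 (hp a)
  obtain ⟨b, hb⟩ := h.exists_eventually_lt hμ hμκ F
  obtain ⟨c, hbc⟩ := exists_gt b
  refine ⟨b, c, hbc, hb.mono fun a ha ↦ ?_⟩
  rw [hF a b ha.le, hF a c (ha.trans hbc).le]

theorem exists_forall_ge_eventuallyEq (h : HasSmallRanges U μ κ) (hμ : ℵ₀ ≤ μ) (hμκ : μ < κ)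
    {B : Type u} [LinearOrder B] {p : SuccType κ → D → B} (hp : Monotone p)
    (hcard : ∀ a, #(range (p · a)) ≤ μ) : ∃ β₀, ∀ β ≥ β₀, p β =ᶠ[U] p β₀ := by
  by_contra! hne
  choose b hle hb using hne
  obtain ⟨β, hβ⟩ := SuccType.exists_seq_apply_lt (hμ.trans hμκ.le)
    (fun i : SuccType μ ↦ (SuccType.mk_Iio_le i).trans hμκ.le) b
  have hmono : Monotone β := monotone_iff_forall_lt.2 fun k i hki ↦ (hle _).trans (hβ k i hki).le
  obtain ⟨i, j, hij, heq⟩ := h.exists_lt_eventuallyEq hμ hμκ (p := p ∘ β) fun a ↦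
    SuccType.eventuallyConst_of_monotone hμ (fun _ _ hki ↦ hp (hmono hki) a)
      ((mk_le_mk_of_subset (range_comp_subset_range β (p · a))).trans (hcard a))
  refine hb (β i) (heq.mono fun a ha ↦ ?_)
  exact ((hp (hβ i j hij).le a).trans_eq ha.symm).antisymm (hp (hle _) a)

end HasSmallRanges

section WeaklyNormal

section LeastCoded

variable {T K : Type u} [LinearOrder T] [WellFoundedLT T] (e : T → T → K)

/-- The least `ζ` strictly between `β` and `α` whose code `e α ζ` lies in `X`, or `α` if there is
no such `ζ`. When `e α` enumerates the predecessors of `α`, the functions `leastCoded e X β` of `α`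
are the candidates for the least function that is unbounded modulo an ultrafilter. -/
noncomputable def leastCoded (X : Set K) (β α : T) : T :=
  wellFounded_lt.min (insert α {ζ ∈ Ioo β α | e α ζ ∈ X}) (insert_nonempty _ _)

variable {e} {X Y : Set K} {β γ α ζ : T}

theorem leastCoded_mem : leastCoded e X β α ∈ insert α {ζ ∈ Ioo β α | e α ζ ∈ X} :=
  WellFounded.min_mem ..

theorem leastCoded_le_self : leastCoded e X β α ≤ α :=
  WellFounded.min_le _ (mem_insert _ _)

theorem leastCoded_le (hβ : β < ζ) (hα : ζ < α) (hX : e α ζ ∈ X) : leastCoded e X β α ≤ ζ :=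
  have hζ : ζ ∈ {ζ ∈ Ioo β α | e α ζ ∈ X} := ⟨⟨hβ, hα⟩, hX⟩
  WellFounded.min_le _ (mem_insert_of_mem _ hζ)

theorem lt_leastCoded (h : β < α) : β < leastCoded e X β α := by
  rcases leastCoded_mem (e := e) (X := X) (β := β) (α := α) with heq | hmem
  · rwa [heq]
  · exact hmem.1.1

theorem leastCoded_le_leastCoded (hβ : β ≤ γ) (hX : X ⊆ Y) :
    leastCoded e Y β α ≤ leastCoded e X γ α := by
  rcases leastCoded_mem (e := e) (X := X) (β := γ) (α := α) with heq | hmem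
  · rw [heq]
    exact leastCoded_le_self
  · exact leastCoded_le (hβ.trans_lt hmem.1.1) hmem.1.2 (hX hmem.2)

theorem mk_range_leastCoded_le {μ : Cardinal.{u}} (hμ : ℵ₀ ≤ μ) (he : InjOn (e α) (Iio α))
    (hX : #X ≤ μ) : #(range fun β ↦ leastCoded e X β α) ≤ μ := by
  have hsub : (range fun β ↦ leastCoded e X β α) ⊆ insert α {ζ ∈ Iio α | e α ζ ∈ X} := by
    rintro _ ⟨β, rfl⟩
    exact leastCoded_mem.imp_right fun hζ ↦ ⟨hζ.1.2, hζ.2⟩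
  have hcoded : #{ζ ∈ Iio α | e α ζ ∈ X} ≤ μ :=
    (mk_le_of_injective (f := fun ζ : {ζ ∈ Iio α | e α ζ ∈ X} ↦ (⟨e α ζ, ζ.2.2⟩ : X)) fun ζ ξ h ↦
      Subtype.ext (he ζ.2.1 ξ.2.1 (congrArg Subtype.val h))).trans hX
  exact (mk_le_mk_of_subset hsub).trans
    (mk_insert_le.trans (add_le_of_le hμ hcoded (one_le_aleph0.trans hμ)))

end LeastCoded

variable {μ κ : Cardinal.{u}} {U : Ultrafilter (SuccType κ)}

theorem exists_injOn_Iio (hκ : κ ≠ 0) :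
    ∃ e : SuccType κ → SuccType κ → κ.ord.ToType, ∀ α, InjOn (e α) (Iio α) := by
  have : Nonempty κ.ord.ToType := by simpa
  refine Classical.skolem.1 fun α ↦ exists_injOn_iff_injective.2 ?_
  obtain ⟨j⟩ : Nonempty (Iio α ↪ κ.ord.ToType) := by
    rw [← Cardinal.le_def, mk_ord_toType]
    exact SuccType.mk_Iio_le α
  exact ⟨j, j.injective⟩

theorem exists_set_cofinally_leastCoded_eventuallyEq {K : Type u} (hμ : ℵ₀ ≤ μ) (hμκ : μ < κ)
    (h : HasSmallRanges U μ κ) (e : SuccType κ → SuccType κ → K) :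
    ∃ X : Set K, #X ≤ μ ∧ ∀ Y ⊇ X, #Y ≤ μ →
      ∀ β, ∃ γ ≥ β, leastCoded e Y γ =ᶠ[U] leastCoded e X γ := by
  by_contra! hcon
  have : Nonempty (SuccType κ) := SuccType.nonempty
  choose! N hXN hN β hβ using hcon
  obtain ⟨X, hX⟩ : ∃ X : SuccType μ → {X : Set K // #X ≤ μ}, ∀ i j, i < j → N (X i) ⊆ X j := by
    refine exists_forall_lt_rel (r := fun X Y : {X : Set K // #X ≤ μ} ↦ N X ⊆ Y) fun i g ↦
      ⟨⟨⋃ k, N (g k), ?_⟩, fun k ↦ subset_iUnion (fun k ↦ N (g k)) k⟩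
    calc #(⋃ k, N (g k)) ≤ #(Iio i) * ⨆ k, #(N (g k)) := mk_iUnion_le _
      _ ≤ μ * μ := mul_le_mul' (SuccType.mk_Iio_le i) (ciSup_le' fun k ↦ hN _ (g k).2)
      _ = μ := mul_eq_self hμ
  obtain ⟨γ, hγ⟩ := SuccType.exists_forall_apply_lt (hμ.trans hμκ.le)
    (by simpa using succ_le_of_lt hμκ) fun i ↦ β (X i)
  have hmono : Monotone fun i ↦ (X i : Set K) :=
    monotone_iff_forall_lt.2 fun i j hij ↦ (hXN _ (X i).2).trans (hX i j hij)
  obtain ⟨i, j, hij, heq⟩ := h.exists_lt_eventuallyEq hμ hμκ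
    (p := fun i ↦ leastCoded e (X i) γ) fun α ↦ by
      have : Nonempty (SuccType μ) := SuccType.nonempty
      exact eventuallyConst_atTop_of_antitone fun i j hij ↦
        leastCoded_le_leastCoded le_rfl (hmono hij)
  refine hβ _ (X i).2 γ (hγ i).le (heq.mono fun α hα ↦ ?_)
  exact (leastCoded_le_leastCoded le_rfl (hXN _ (X i).2)).antisymm
    (hα.trans_le (leastCoded_le_leastCoded le_rfl (hX i j hij)))

/-- An ultrafilter on a linear order is weakly normal if every function that is regressive on a
set in it is bounded on a set in it. -/
def WeaklyNormal {T : Type*} [Preorder T] (U : Ultrafilter T) : Prop :=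
  ∀ ψ : T → T, (∀ᶠ α in U, ψ α < α) → ∃ γ, ∀ᶠ α in U, ψ α ≤ γ

theorem exists_weaklyNormal_map (hμ : ℵ₀ ≤ μ) (hμκ : μ < κ) (h : HasSmallRanges U μ κ)
    (hU : (U : Filter (SuccType κ)) ≤ atTop) :
    ∃ φ : SuccType κ → SuccType κ, Tendsto φ U atTop ∧ WeaklyNormal (U.map φ) := by
  have hκ : ℵ₀ ≤ κ := hμ.trans hμκ.le
  have := SuccType.noMaxOrder hκ
  obtain ⟨e, he⟩ := exists_injOn_Iio (aleph0_pos.trans_le hκ).ne'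
  obtain ⟨X, hX, hstable⟩ := exists_set_cofinally_leastCoded_eventuallyEq hμ hμκ h e
  obtain ⟨β₀, hβ₀⟩ := h.exists_forall_ge_eventuallyEq hμ hμκ (p := leastCoded e X)
    (fun _ _ hβ _ ↦ leastCoded_le_leastCoded hβ Subset.rfl)
    fun α ↦ mk_range_leastCoded_le hμ (he α) hX
  refine ⟨leastCoded e X β₀, tendsto_atTop.2 fun β ↦ ?_, fun ψ hψ ↦ ?_⟩
  · filter_upwards [hβ₀ (max β β₀) (le_max_right _ _), hU (Ioi_mem_atTop (max β β₀))] with α heq hα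
    rw [← heq]
    exact (le_max_left _ _).trans (lt_leastCoded hα).le
  · set φ := leastCoded e X β₀
    obtain ⟨Z, hZ, hZU⟩ := h (mk_ord_toType κ).le fun α ↦ e α (ψ (φ α))
    obtain ⟨γ, hγ, heq⟩ := hstable (X ∪ Z) subset_union_left
      ((mk_union_le _ _).trans (add_le_of_le hμ hX hZ)) β₀
    refine ⟨γ, ?_⟩
    change ∀ᶠ α in U, ψ (φ α) ≤ γ
    filter_upwards [hψ, hZU, heq, hβ₀ γ hγ] with α (hψα : ψ (φ α) < φ α) hα heqα hφα
    refine not_lt.1 fun hlt ↦ hψα.not_ge ?_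
    calc φ α = leastCoded e (X ∪ Z) γ α := (heqα.trans hφα).symm
      _ ≤ ψ (φ α) := leastCoded_le hlt (hψα.trans_le leastCoded_le_self) (subset_union_right hα)

end WeaklyNormal

section Ladder

variable {K T : Type u} [LinearOrder K] [WellFoundedLT K] [LinearOrder T]

/-- A cofinal sequence in `Iio α`: `c` restricts to a monotone cofinal map from `Iio χ`, whose order
type is a regular cardinal. Thus the point `χ` of the well order `K` represents `cf α`. -/
structure IsLadder (α : T) (χ : K) (c : K → T) : Prop where
  regular : IsRegularCardinalOrder (Iio χ)
  lt : ∀ ι < χ, c ι < α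
  exists_le : ∀ ζ < α, ∃ ι < χ, ζ ≤ c ι
  monotoneOn : MonotoneOn c (Iio χ)

theorem exists_mk_Iio_eq {l : Cardinal.{u}} (h : l.ord < typeLT K) :
    ∃ r : K, typeLT (Iio r) = l.ord ∧ #(Iio r) = l := by
  obtain ⟨r, hr⟩ := Ordinal.typein_surj (α := K) (· < ·) h
  rw [← Ordinal.type_Iio_lt] at hr
  exact ⟨r, hr, by rw [← Ordinal.card_type (α := Iio r) (· < ·), hr, card_ord]⟩

theorem exists_isLadder [WellFoundedLT T] {α : T} (h : (cof (Iio α)).ord < typeLT K) :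
    ∃ (χ : K) (c : K → T), IsLadder α χ c := by
  obtain ⟨χ, hχ, -⟩ := exists_mk_Iio_eq h
  obtain ⟨s, hs, hst⟩ := Ordinal.exists_ord_cof_eq (Iio α)
  obtain ⟨f⟩ := Ordinal.type_eq.1 (hχ.trans hst.symm)
  set c : K → T := Function.extend Subtype.val (fun i ↦ ((f i : Iio α) : T)) fun _ ↦ α
  have hc (i : Iio χ) : c i = (f i : Iio α) := Subtype.val_injective.extend_apply _ _ i
  refine ⟨χ, c, ⟨?_⟩, fun ι hι ↦ ?_, fun ζ hζ ↦ ?_, fun ι hι ι' hι' hle ↦ ?_⟩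
  · rw [← Ordinal.cof_type, hχ, cof_ord_cof]
  · rw [hc ⟨ι, hι⟩]
    exact (f ⟨ι, hι⟩).1.2
  · obtain ⟨y, hy, hζy⟩ := hs ⟨ζ, hζ⟩
    refine ⟨f.symm ⟨y, hy⟩, (f.symm ⟨y, hy⟩).2, ?_⟩
    rw [hc, RelIso.apply_symm_apply]
    exact hζy
  · rw [hc ⟨ι, hι⟩, hc ⟨ι', hι'⟩]
    exact (OrderIso.ofRelIsoLT f).monotone (Subtype.mk_le_mk.2 hle)

theorem mk_Iio_lt_mk_Iio {r s : K} (hr : IsRegularCardinalOrder (Iio r)) (hsr : s < r) :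
    #(Iio s) < #(Iio r) := by
  have h := mk_Iio_lt (⟨s, hsr⟩ : Iio r) ord_cardinalMk
  refine lt_of_le_of_lt (mk_le_of_injective
    (f := fun x : Iio s ↦ (⟨⟨x, x.2.trans hsr⟩, x.2⟩ : Iio (⟨s, hsr⟩ : Iio r))) ?_) h
  exact fun x y hxy ↦ Subtype.ext (congrArg (fun z ↦ (z.1 : K)) hxy)

theorem exists_lt_forall_lt {r : K} (hr : IsRegularCardinalOrder (Iio r)) {s : Set K}
    (hs : s ⊆ Iio r) (hsr : #s < #(Iio r)) : ∃ b < r, ∀ a ∈ s, a < b := by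
  have hcof : ¬ IsCofinal ((↑) ⁻¹' s : Set (Iio r)) := fun h ↦ by
    have := (cof_le h).trans (mk_preimage_of_injective _ s Subtype.val_injective)
    rw [cof_eq_cardinalMk] at this
    exact hsr.not_ge this
  obtain ⟨b, hb⟩ := not_isCofinal_iff.1 hcof
  exact ⟨b, b.2, fun a ha ↦ hb ⟨a, hs ha⟩ ha⟩

end Ladder

namespace SuccType

variable {κ : Cardinal.{u}}

theorem cof_Iio_lt (hκ : κ.IsSingular) (α : SuccType κ) : cof (Iio α) < κ := by
  refine ((cof_le_cardinalMk _).trans (mk_Iio_le α)).lt_of_ne fun h ↦ hκ.cof_ord_ne ?_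
  rw [← h, cof_ord_cof]

theorem exists_isLadder (hκ : κ.IsSingular) (α : SuccType κ) :
    ∃ (χ : κ.ord.ToType) (c : κ.ord.ToType → SuccType κ), IsLadder α χ c :=
  UltrafilterNumber.exists_isLadder (by simpa using cof_Iio_lt hκ α)

end SuccType

section Cover

variable {μ κ : Cardinal.{u}} {U : Ultrafilter (SuccType κ)}
  {K : Type u} [LinearOrder K] [WellFoundedLT K]
  {χ : SuccType κ → K} {c : SuccType κ → K → SuccType κ}

theorem exists_eventually_exists_mem_Ico (hκ : ℵ₀ ≤ κ) (hU : (U : Filter (SuccType κ)) ≤ atTop)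
    (hwn : WeaklyNormal U) (hc : ∀ α, IsLadder α (χ α) (c α)) (β : SuccType κ) :
    ∃ γ, ∀ᶠ α in U, ∃ ι < χ α, c α ι ∈ Ico β γ := by
  have : Nonempty K := ⟨χ β⟩
  have := SuccType.noMaxOrder hκ
  have hβ : ∀ᶠ α in U, β < α := hU (Ioi_mem_atTop β)
  choose! t ht hβt using fun α (hα : β < α) ↦ (hc α).exists_le β hα
  obtain ⟨γ, hγ⟩ := hwn (fun α ↦ c α (t α)) (hβ.mono fun α hα ↦ (hc α).lt _ (ht α hα))
  obtain ⟨γ', hγγ'⟩ := exists_gt γ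
  exact ⟨γ', by filter_upwards [hβ, hγ] with α hα hγα
    using ⟨t α, ht α hα, hβt α hα, hγα.trans_lt hγγ'⟩⟩

theorem exists_cover (hκ : ℵ₀ ≤ κ) (hU : (U : Filter (SuccType κ)) ≤ atTop)
    (hwn : WeaklyNormal U) (hc : ∀ α, IsLadder α (χ α) (c α)) :
    ∃ A : SuccType κ → Set (SuccType κ),
      (∀ α, #(A α) ≤ #(Iio (χ α))) ∧ ∀ ξ, ∀ᶠ α in U, ξ ∈ A α := by
  choose γ hγ using exists_eventually_exists_mem_Ico hκ hU hwn hc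
  obtain ⟨β, hβ⟩ := SuccType.exists_seq_apply_lt hκ (fun i : SuccType κ ↦ SuccType.mk_Iio_le i) γ
  have huniq {i j z} (hi : z ∈ Ico (β i) (γ (β i))) (hj : z ∈ Ico (β j) (γ (β j))) : i = j := by
    by_contra! hne
    rcases hne.lt_or_gt with h | h
    · exact (hi.2.trans (hβ i j h)).not_ge hj.1
    · exact (hj.2.trans (hβ j i h)).not_ge hi.1
  refine ⟨fun α ↦ {ξ | ∃ ι < χ α, c α ι ∈ Ico (β ξ) (γ (β ξ))}, fun α ↦ ?_, fun ξ ↦ hγ (β ξ)⟩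
  choose ι hι hmem using fun ξ : {ξ | ∃ ι < χ α, c α ι ∈ Ico (β ξ) (γ (β ξ))} ↦ ξ.2
  refine mk_le_of_injective (f := fun ξ ↦ (⟨ι ξ, hι ξ⟩ : Iio (χ α))) fun ξ ζ h ↦ Subtype.ext ?_
  have heq : ι ξ = ι ζ := congrArg Subtype.val h
  exact huniq (hmem ξ) (heq ▸ hmem ζ)

end Cover

section Progressive

variable {K : Type u} [LinearOrder K] [WellFoundedLT K]

/-- A progressive set of regular cardinals, as points of the well order `K`: every member is a
regular cardinal greater than a fixed bound `μ` on the number of members. -/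
structure IsProgressive (R : Set K) (μ : Cardinal.{u}) : Prop where
  mk_le : #R ≤ μ
  lt_mk : ∀ r ∈ R, μ < #(Iio r)
  regular : ∀ r ∈ R, IsRegularCardinalOrder (Iio r)

/-- `g` restricts to a member of the product `∏ R` of the cardinals in `R`; its values outside `R`
are irrelevant. -/
def Regressive (R : Set K) (g : K → K) : Prop := ∀ r ∈ R, g r < r

variable {R : Set K} {μ : Cardinal.{u}}

theorem IsProgressive.exists_regressive_forall_lt (hR : IsProgressive R μ) {S : K → Set K}
    (hS : ∀ r ∈ R, S r ⊆ Iio r) (hcard : ∀ r ∈ R, #(S r) < #(Iio r)) :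
    ∃ g, Regressive R g ∧ ∀ r ∈ R, ∀ s ∈ S r, s < g r := by
  choose! g hg hSg using fun r hr ↦ exists_lt_forall_lt (hR.regular r hr) (hS r hr) (hcard r hr)
  exact ⟨g, hg, hSg⟩

theorem IsProgressive.exists_regressive_forall_apply_lt (hR : IsProgressive R μ) {ι : Type u}
    (hι : #ι ≤ μ) {f : ι → K → K} (hf : ∀ i, Regressive R (f i)) :
    ∃ g, Regressive R g ∧ ∀ r ∈ R, ∀ i, f i r < g r := by
  obtain ⟨g, hg, hfg⟩ := hR.exists_regressive_forall_lt (S := fun r ↦ range (f · r))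
    (fun r hr ↦ range_subset_iff.2 fun i ↦ hf i r hr)
    fun r hr ↦ (mk_range_le.trans hι).trans_lt (hR.lt_mk r hr)
  exact ⟨g, hg, fun r hr i ↦ hfg r hr _ (mem_range_self i)⟩

theorem IsProgressive.exists_regressive_eventually_lt_comp (hR : IsProgressive R μ) {D : Type u}
    {U : Ultrafilter D} (h : HasSmallRanges U μ #K) {ν G : D → K} (hν : ∀ᶠ a in U, ν a ∈ R)
    (hG : ∀ᶠ a in U, G a < ν a) : ∃ g, Regressive R g ∧ ∀ᶠ a in U, G a < g (ν a) := by
  obtain ⟨X, hX, hXU⟩ := h le_rfl G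
  obtain ⟨g, hg, hXg⟩ := hR.exists_regressive_forall_lt (S := fun r ↦ X ∩ Iio r)
    (fun r _ ↦ inter_subset_right)
    fun r hr ↦ ((mk_le_mk_of_subset inter_subset_left).trans hX).trans_lt (hR.lt_mk r hr)
  refine ⟨g, hg, ?_⟩
  filter_upwards [hν, hG, hXU] with a hνa hGa hXa using hXg _ hνa _ ⟨hXa, hGa⟩

theorem IsProgressive.exists_regressive_eventually_lt [NoMaxOrder K] (hR : IsProgressive R μ)
    (hcof : cof K ≤ μ) {ι : Type u} (hι : #ι ≤ #K) {f : ι → K → K} (hf : ∀ i, Regressive R (f i)) :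
    ∃ g, Regressive R g ∧ ∀ i, ∀ᶠ r in atTop ⊓ 𝓟 R, f i r < g r := by
  obtain ⟨e⟩ : Nonempty (ι ↪ K) := hι
  obtain ⟨C, hC, hCcof⟩ := exists_cof_eq K
  obtain ⟨l, hl, hCl⟩ := hR.exists_regressive_forall_lt (S := fun r ↦ C ∩ Iio r)
    (fun r _ ↦ inter_subset_right) fun r hr ↦ (mk_le_mk_of_subset inter_subset_left).trans_lt
      ((hCcof.trans_le hcof).trans_lt (hR.lt_mk r hr))
  obtain ⟨g, hg, hfg⟩ := hR.exists_regressive_forall_lt (S := fun r ↦ (f · r) '' (e ⁻¹' Iio (l r)))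
    (fun r hr ↦ image_subset_iff.2 fun i _ ↦ hf i r hr) fun r hr ↦
      (mk_image_le.trans (mk_preimage_of_injective _ _ e.injective)).trans_lt
        (mk_Iio_lt_mk_Iio (hR.regular r hr) (hl r hr))
  refine ⟨g, hg, fun i ↦ ?_⟩
  obtain ⟨y, hy, hey⟩ := hC (e i)
  rw [eventually_inf_principal]
  filter_upwards [Ioi_mem_atTop y] with r hyr hr
  exact hfg r hr _ (mem_image_of_mem _ (hey.trans_lt (hCl r hr y ⟨hy, hyr⟩)))

theorem IsProgressive.exists_regressive_cofinally_lt {κ : Cardinal.{u}} (hR : IsProgressive R μ)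
    (hμ : ℵ₀ ≤ μ) (hμκ : μ < κ) (f : SuccType κ → K → K) :
    ∃ G, Regressive R G ∧ ∀ β g, Regressive R g →
      ∃ ξ ≥ β, ∀ r ∈ R, G r < f ξ r → g r < f ξ r := by
  by_contra! hcon
  have : Nonempty (SuccType κ) := SuccType.nonempty
  choose! β g hg hβg using hcon
  obtain ⟨G, hG⟩ : ∃ G : SuccType μ → {G // Regressive R G},
      ∀ k i, k < i → ∀ r ∈ R, g (G k) r < (G i : K → K) r := by
    refine exists_forall_lt_rel
      (r := fun G H : {G // Regressive R G} ↦ ∀ r ∈ R, g G r < (H : K → K) r) fun i G ↦ ?_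
    obtain ⟨H, hH, hGH⟩ := hR.exists_regressive_forall_apply_lt (SuccType.mk_Iio_le i)
      fun k ↦ hg _ (G k).2
    exact ⟨⟨H, hH⟩, fun k r hr ↦ hGH r hr k⟩
  obtain ⟨ξ, hξ⟩ := SuccType.exists_forall_apply_lt (hμ.trans hμκ.le)
    (by simpa using succ_le_of_lt hμκ) fun i ↦ β (G i)
  choose r hrR hGr hrg using fun i ↦ hβg _ (G i).2 ξ (hξ i).le
  have hinj : Function.Injective fun i ↦ (⟨r i, hrR i⟩ : R) := by
    refine Function.Injective.of_lt_imp_ne fun k i hki heq ↦ ?_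
    have hlt := (hrg k).trans_lt (hG k i hki _ (hrR k))
    rw [show r k = r i from congrArg Subtype.val heq] at hlt
    exact (hGr i).not_gt hlt
  have hcard := (mk_le_of_injective hinj).trans hR.mk_le
  simp at hcard

end Progressive

section Indecomposable

variable {μ κ : Cardinal.{u}} {U : Ultrafilter (SuccType κ)}
  {χ : SuccType κ → κ.ord.ToType} {c : SuccType κ → κ.ord.ToType → SuccType κ}

theorem HasSmallRanges.tendsto_ladder (h : HasSmallRanges U μ κ) (hμ : ℵ₀ ≤ μ) (hμκ : μ < κ)
    (hU : (U : Filter (SuccType κ)) ≤ atTop) (hwn : WeaklyNormal U)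
    (hc : ∀ α, IsLadder α (χ α) (c α)) : Tendsto χ U atTop := by
  have hκ := hμ.trans hμκ.le
  refine tendsto_atTop.2 fun k ↦ ?_
  by_contra hk
  replace hk : ∀ᶠ α in U, χ α < k := by
    simpa only [not_le] using Ultrafilter.eventually_not.2 hk
  obtain ⟨A, hA, hAU⟩ := exists_cover hκ hU hwn hc
  have hdκ : max μ #(Iio k) < κ := max_lt hμκ (by simpa using mk_Iio_lt k)
  set d := max μ #(Iio k)
  obtain ⟨j⟩ : Nonempty (SuccType d ↪ SuccType κ) := by
    rw [← Cardinal.le_def, mk_ord_toType, mk_ord_toType]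
    exact succ_le_succ hdκ.le
  obtain ⟨b, hb⟩ := (h.mono (le_max_left ..)).exists_eventually_notMem (hμ.trans (le_max_left ..))
    hdκ (A := fun α ↦ j ⁻¹' A α) <| hk.mono fun α hα ↦
      calc #(j ⁻¹' A α) ≤ #(A α) := mk_preimage_of_injective _ _ j.injective
        _ ≤ #(Iio k) := (hA α).trans (mk_le_mk_of_subset (Iio_subset_Iio hα.le))
        _ ≤ d := le_max_right ..
  obtain ⟨α, hα, hbα⟩ := (hb.and (hAU (j b))).exists
  exact hα hbα

theorem HasSmallRanges.exists_isProgressive (h : HasSmallRanges U μ κ) (hκ : ℵ₀ ≤ κ)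
    (hμκ : μ < κ) (hc : ∀ α, IsLadder α (χ α) (c α)) (hχ : Tendsto χ U atTop) :
    ∃ R, IsProgressive R μ ∧ ∀ᶠ α in U, χ α ∈ R := by
  obtain ⟨X, hX, hXU⟩ := h (mk_ord_toType κ).le χ
  obtain ⟨k, -, hk⟩ := exists_mk_Iio_eq (K := κ.ord.ToType) (l := μ) (by simpa using hμκ)
  have : NoMaxOrder κ.ord.ToType := Cardinal.noMaxOrder hκ
  refine ⟨{r ∈ X | μ < #(Iio r) ∧ IsRegularCardinalOrder (Iio r)},
    ⟨(mk_le_mk_of_subset (sep_subset _ _)).trans hX, fun r hr ↦ hr.2.1, fun r hr ↦ hr.2.2⟩, ?_⟩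
  filter_upwards [hXU, hχ.eventually_gt_atTop k] with α hα hkα
  exact ⟨hα, hk.symm.trans_lt (mk_Iio_lt_mk_Iio (hc α).regular hkα), (hc α).regular⟩

variable {R : Set κ.ord.ToType}

theorem IsProgressive.exists_regressive_unbounded (hR : IsProgressive R μ) (hκ : ℵ₀ ≤ κ)
    (h : HasSmallRanges U μ κ) (hU : (U : Filter (SuccType κ)) ≤ atTop) (hwn : WeaklyNormal U)
    (hc : ∀ α, IsLadder α (χ α) (c α)) (hχR : ∀ᶠ α in U, χ α ∈ R) :
    ∃ x : SuccType κ → κ.ord.ToType → κ.ord.ToType, (∀ β, Regressive R (x β)) ∧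
      ∀ g, Regressive R g → ∃ β, ∀ᶠ α in U, g (χ α) < x β (χ α) := by
  have := SuccType.noMaxOrder hκ
  have hβ (β : SuccType κ) : ∀ᶠ α in U, β < α := hU (Ioi_mem_atTop β)
  have : Nonempty κ.ord.ToType := SuccType.nonempty.map χ
  choose! t ht hβt using fun α β (hα : β < α) ↦ (hc α).exists_le β hα
  choose x hx htx using fun β ↦ hR.exists_regressive_eventually_lt_comp (G := (t · β))
    (by rwa [mk_ord_toType]) hχR ((hβ β).mono fun α hα ↦ ht α β hα)
  refine ⟨x, hx, fun g hg ↦ ?_⟩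
  obtain ⟨γ, hγ⟩ := hwn (fun α ↦ c α (g (χ α))) (hχR.mono fun α hα ↦ (hc α).lt _ (hg _ hα))
  obtain ⟨β, hγβ⟩ := exists_gt γ
  refine ⟨β, ?_⟩
  filter_upwards [hχR, hγ, hβ β, htx β] with α hα hγα hβα htxα
  refine lt_of_not_ge fun hle ↦ hγβ.not_ge ?_
  calc β ≤ c α (t α β) := hβt α β hβα
    _ ≤ c α (g (χ α)) := (hc α).monotoneOn (ht α β hβα) (hg _ hα) (htxα.le.trans hle)
    _ ≤ γ := hγα

theorem IsProgressive.exists_regressive_frequently_lt (hR : IsProgressive R μ) (hκ : ℵ₀ ≤ κ)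
    (h : HasSmallRanges U μ κ) (hU : (U : Filter (SuccType κ)) ≤ atTop) (hwn : WeaklyNormal U)
    (hc : ∀ α, IsLadder α (χ α) (c α)) (hχ : Tendsto χ U atTop)
    {f : SuccType κ → κ.ord.ToType → κ.ord.ToType} (hf : ∀ ξ, Regressive R (f ξ))
    {p : κ.ord.ToType → Prop} (hp : ∃ᶠ r in atTop ⊓ 𝓟 R, p r) :
    ∃ g, Regressive R g ∧ ∀ ξ, ∃ᶠ r in atTop ⊓ 𝓟 R, p r ∧ f ξ r < g r := by
  obtain ⟨A, hA, hAU⟩ := exists_cover hκ hU hwn hc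
  have : NoMaxOrder κ.ord.ToType := Cardinal.noMaxOrder hκ
  choose ν hν using fun y ↦
    ((frequently_inf_principal.1 hp).and_eventually (eventually_gt_atTop y)).exists
  have hbound (α) : ∃ b < ν (χ α), ∀ a ∈ (f · (ν (χ α))) '' A α, a < b :=
    exists_lt_forall_lt (hR.regular _ (hν _).1.1)
      (image_subset_iff.2 fun ξ _ ↦ hf ξ _ (hν _).1.1)
      (mk_image_le.trans_lt ((hA α).trans_lt
        (mk_Iio_lt_mk_Iio (hR.regular _ (hν _).1.1) (hν _).2)))
  choose G hG hfG using hbound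
  obtain ⟨g, hg, hGg⟩ := hR.exists_regressive_eventually_lt_comp (ν := ν ∘ χ) (G := G)
    (by rwa [mk_ord_toType]) (.of_forall fun α ↦ (hν _).1.1) (.of_forall hG)
  have hνχ : Tendsto (ν ∘ χ) U (atTop ⊓ 𝓟 R) := tendsto_inf.2
    ⟨tendsto_atTop_mono (fun α ↦ (hν _).2.le) hχ,
      tendsto_principal.2 (.of_forall fun α ↦ (hν _).1.1)⟩
  refine ⟨g, hg, fun ξ ↦ hνχ.frequently (Eventually.frequently ?_)⟩
  filter_upwards [hAU ξ, hGg] with α hα hGgα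
  exact ⟨(hν _).1.2, (hfG α _ (mem_image_of_mem _ hα)).trans hGgα⟩

theorem not_hasSmallRanges (hκ : κ.IsSingular) (hμ : ℵ₀ ≤ μ) (hcof : κ.ord.cof ≤ μ) (hμκ : μ < κ)
    (hU : (U : Filter (SuccType κ)) ≤ atTop) : ¬ HasSmallRanges U μ κ := by
  intro h
  obtain ⟨φ, hφ, hwn⟩ := exists_weaklyNormal_map hμ hμκ h hU
  replace h := h.map φ
  set V := U.map φ
  choose χ c hc using SuccType.exists_isLadder hκ
  have hχ := h.tendsto_ladder hμ hμκ hφ hwn hc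
  obtain ⟨R, hR, hχR⟩ := h.exists_isProgressive hκ.aleph0_le hμκ hc hχ
  have : NoMaxOrder κ.ord.ToType := Cardinal.noMaxOrder hκ.aleph0_le
  obtain ⟨x, hx, hxunb⟩ := hR.exists_regressive_unbounded hκ.aleph0_le h hφ hwn hc hχR
  choose f hf hxf using fun ξ : SuccType κ ↦
    hR.exists_regressive_eventually_lt (by simpa) (ι := Iic ξ)
      (by simpa using SuccType.mk_Iic_le hκ.aleph0_le ξ) fun β ↦ hx β
  obtain ⟨G, hG, hGf⟩ := hR.exists_regressive_cofinally_lt hμ hμκ f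
  obtain ⟨β, hβ⟩ := hxunb G hG
  have hfreq : ∃ᶠ r in atTop ⊓ 𝓟 R, G r < x β r :=
    (tendsto_inf.2 ⟨hχ, tendsto_principal.2 hχR⟩).frequently hβ.frequently
  obtain ⟨g, hg, hfg⟩ :=
    hR.exists_regressive_frequently_lt hκ.aleph0_le h hφ hwn hc hχ hf hfreq
  obtain ⟨ξ, hβξ, hξ⟩ := hGf β g hg
  have hR' : ∀ᶠ r in atTop ⊓ 𝓟 R, r ∈ R := mem_inf_of_right (mem_principal_self R)
  obtain ⟨r, ⟨hGx, hfgr⟩, hxfr, hr⟩ := ((hfg ξ).and_eventually ((hxf ξ ⟨β, hβξ⟩).and hR')).exists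
  exact (hξ r hr (hGx.trans hxfr)).not_gt hfgr

end Indecomposable

section CountableCofinality

variable {S : Type u} {U : Ultrafilter S} {κ : Cardinal.{u}}

theorem exists_decomposable_mem_Ioc (hκ : κ.IsSingular) (hU : Decomposable U (succ κ))
    {μ : Cardinal.{u}} (hμκ : μ < κ) : ∃ l ∈ Ioc μ κ, Decomposable U l := by
  rw [← mk_ord_toType (succ κ), decomposable_mk_iff] at hU
  obtain ⟨f, hf⟩ := hU
  have hle : (U.map f : Filter (SuccType κ)) ≤ atTop := by
    refine le_iInf fun a ↦ le_principal_iff.2 ?_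
    rw [← compl_Iio]
    refine Ultrafilter.compl_mem_iff_notMem.2 (hf _ ?_)
    simpa using (SuccType.mk_Iio_le a).trans_lt (lt_succ κ)
  by_contra! h
  have hsmall : HasSmallRanges (U.map f) μ κ :=
    hasSmallRanges_of_not_decomposable fun l hl hdec ↦ h l hl (decomposable_of_map hdec)
  have hℵ₀ : ℵ₀ < κ := hκ.aleph0_le.lt_of_ne fun heq ↦ hκ.not_isRegular (heq ▸ isRegular_aleph0)
  exact not_hasSmallRanges hκ (le_max_of_le_right (le_max_left ..))
    (le_max_of_le_right (le_max_right ..)) (max_lt hμκ (max_lt hℵ₀ hκ.cof_ord_lt)) hle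
    (hsmall.mono (le_max_left ..))

theorem exists_forall_preimage_notMem_of_decomposable {l : Cardinal.{u}} (h : Decomposable U l)
    {A : Type u} (hA : l ≤ #A) : ∃ F : S → A, ∀ X : Set A, #X < l → F ⁻¹' X ∉ U := by
  obtain ⟨f, hf⟩ := h
  obtain ⟨j⟩ : Nonempty (l.out ↪ A) := by rwa [← Cardinal.le_def, mk_out]
  exact ⟨j ∘ f, fun X hX ↦
    hf (j ⁻¹' X) ((mk_preimage_of_injective j X j.injective).trans_lt hX)⟩

theorem isCountablyGenerated_atTop {K : Type*} [LinearOrder K] [Nonempty K] (h : cof K ≤ ℵ₀) :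
    (atTop : Filter K).IsCountablyGenerated := by
  obtain ⟨C, hC, hCcof⟩ := exists_cof_eq K
  have hCc : C.Countable := le_aleph0_iff_set_countable.1 (hCcof.trans_le h)
  refine HasCountableBasis.isCountablyGenerated (p := (· ∈ C)) (s := Ici)
    ⟨atTop_basis.to_hasBasis (fun a _ ↦ ?_) fun a _ ↦ ⟨a, trivial, Subset.rfl⟩, hCc⟩
  obtain ⟨b, hb, hab⟩ := hC a
  exact ⟨b, hb, Ici_subset_Ici.2 hab⟩

theorem exists_seq_eventually_le (hcof : κ.ord.cof ≤ ℵ₀) (hκ : κ ≠ 0) :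
    ∃ m : ℕ → Cardinal.{u}, (∀ n, m n < κ) ∧ ∀ l < κ, ∀ᶠ n in atTop, l ≤ m n := by
  have : Nonempty κ.ord.ToType := by simpa
  have := isCountablyGenerated_atTop (K := κ.ord.ToType) (by simpa)
  obtain ⟨k, hk⟩ := exists_seq_tendsto (atTop : Filter κ.ord.ToType)
  refine ⟨fun n ↦ #(Iio (k n)), fun n ↦ by simpa using mk_Iio_lt (k n), fun l hl ↦ ?_⟩
  obtain ⟨r, -, rfl⟩ := exists_mk_Iio_eq (K := κ.ord.ToType) (l := l) (by simpa using hl)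
  exact (hk.eventually_ge_atTop r).mono fun n hn ↦ mk_le_mk_of_subset (Iio_subset_Iio hn)

theorem mk_setOf_exists_mem_list_le {A : Type u} (X : Set (List A)) :
    #{a | ∃ l ∈ X, a ∈ l} ≤ max ℵ₀ #X := by
  have hunion : {a | ∃ l ∈ X, a ∈ l} = ⋃ l : X, {a | a ∈ l.1} := by
    ext; simp
  calc #{a | ∃ l ∈ X, a ∈ l} ≤ #X * ⨆ l : X, #{a | a ∈ l.1} := hunion ▸ mk_iUnion_le _
    _ ≤ max ℵ₀ #X * max ℵ₀ #X := mul_le_mul' (le_max_right ..) <| ciSup_le' fun l ↦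
        le_max_of_le_left (List.finite_toSet l.1).lt_aleph0.le
    _ = max ℵ₀ #X := mul_eq_self (le_max_left ..)

theorem decomposable_of_forall_exists_mem_Ioc (hcof : κ.ord.cof = ℵ₀) (hκ : ℵ₀ < κ)
    (hω : Decomposable U aleph0.{0}) (h : ∀ μ < κ, ∃ l ∈ Ioc μ κ, Decomposable U l) :
    Decomposable U κ := by
  obtain ⟨g, hg⟩ := decomposable_aleph0_iff.1 hω
  obtain ⟨m, hmκ, hm⟩ := exists_seq_eventually_le hcof.le (aleph0_pos.trans hκ).ne'
  choose l hl hdec using fun n ↦ h (m n) (hmκ n)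
  choose F hF using fun n ↦ exists_forall_preimage_notMem_of_decomposable (hdec n)
    (A := κ.ord.ToType) (by simpa using (hl n).2)
  have : Infinite κ.ord.ToType := by simpa [infinite_iff] using hκ.le
  rw [← mk_ord_toType κ, ← mk_list_eq_mk, decomposable_mk_iff]
  refine ⟨fun a ↦ (List.range (g a)).map (F · a), fun X hX hXU ↦ ?_⟩
  obtain ⟨n, hn⟩ := (hm (max ℵ₀ #X) (max_lt hκ (by simpa using hX))).exists
  refine hF n {y | ∃ l ∈ X, y ∈ l}
    ((mk_setOf_exists_mem_list_le X).trans_lt (hn.trans_lt (hl n).1)) ?_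
  filter_upwards [hXU, hg.eventually_gt_atTop n] with a haX han
  exact ⟨_, haX, List.mem_map.2 ⟨n, List.mem_range.2 han, rfl⟩⟩

theorem decomposable_of_decomposable_succ (hcof : κ.ord.cof = ℵ₀) (hκ : ℵ₀ < κ)
    (hω : Decomposable U aleph0.{0}) (hU : Decomposable U (succ κ)) : Decomposable U κ :=
  decomposable_of_forall_exists_mem_Ioc hcof hκ hω fun _ ↦
    exists_decomposable_mem_Ioc ⟨hκ.le, by rw [hcof]; exact hκ.ne⟩ hU

end CountableCofinality

end UltrafilterNumber

/-- If `κ` is singular of countable cofinality then `u(κ) ≤ u(κ⁺)`. -/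
theorem stmt14 (κ : Cardinal.{u}) (hcof : κ.ord.cof = ℵ₀) (hκ : ℵ₀ < κ) :
    uNumber κ ≤ uNumber (Order.succ κ) := by
  obtain ⟨U, hU, hUu⟩ :=
    UltrafilterNumber.exists_uniform_charU_eq_uNumber (isRegular_succ hκ.le)
  have : Nontrivial (Order.succ κ).out := by
    rw [← one_lt_iff_nontrivial, mk_out]
    exact one_lt_aleph0.trans (hκ.trans (Order.lt_succ κ))
  obtain ⟨V, hVU, hVω, hVu⟩ := UltrafilterNumber.exists_decomposable_aleph0_map_snd_eq hU
  have hVsucc : Decomposable V (Order.succ κ) := by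
    refine UltrafilterNumber.decomposable_of_map (f := Prod.snd) ?_
    simpa only [hVU, mk_out] using UltrafilterNumber.decomposable_mk_of_uniform hU
  have hVκ : Decomposable V κ :=
    UltrafilterNumber.decomposable_of_decomposable_succ hcof hκ hVω hVsucc
  calc uNumber κ ≤ charU V := UltrafilterNumber.uNumber_le_charU hVκ
    _ ≤ charU U := hVu
    _ = uNumber (Order.succ κ) := hUu
end

section
/- If κ is a strong limit singular cardinal, then u(κ) ≤ u(κ⁺). -/
open Cardinal Set

universe u v

/-!
Let `U` be a uniform ultrafilter on a set `S` of size `κ⁺` whose character is `u(κ⁺)`. If `U` is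
`κ`-decomposable, then its image under a decomposing map is a uniform ultrafilter on `κ`, and
`u(κ) ≤ u(κ⁺)`. Otherwise `2 ^ κ ≤ κ⁺`, so that `u(κ) ≤ 2 ^ κ ≤ κ⁺ ≤ u(κ⁺)`. To see this,
well-order a set `K` in type `κ` and distinguish two cases.

* Every map `S → K` is bounded `U`-almost everywhere. Then `U` is `(κ, κ)`-regular, as witnessed
  by sets `A s` of fewer than `κ` bounded subsets of `K`. Every subset of `K` is the union of a
  subfamily of some `A s`, and there are at most `κ⁺ * κ` such unions.
* Some `p : S → K` tends to infinity along `U`. Diagonalising along `p` yields `θ < κ` such that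
  `U` is `l`-indecomposable for all `l` between `θ` and `κ`. As `p` is concentrated on a cofinal
  set `C` with fewer than `κ` elements, and the ultrapower of `C` by `U` has fewer than `κ` elements
  too, the initial segments below `C` of `κ⁺` distinct subsets of `K` take fewer than `κ` values
  `U`-almost everywhere. This gives a set of size less than `κ` in `U`, against uniformity.
-/

open Filter
open scoped Ordinal

/-! ### Cardinal arithmetic -/

section CardinalArithmetic

theorem power_lt_of_isStrongLimit {κ a b : Cardinal.{u}} (hκ : κ.IsStrongLimit) (ha : a < κ)
    (hb : b < κ) : a ^ b < κ :=
  calc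
    a ^ b ≤ (2 ^ a) ^ b := power_le_power_right (cantor a).le
    _ = 2 ^ (a * b) := (power_mul ..).symm
    _ < κ := hκ.isStrongPrelimit (mul_lt_of_lt hκ.aleph0_le ha hb)

theorem mk_iUnion_le_mul {ι α : Type u} {A : ι → Set α} {c : Cardinal.{u}}
    (hA : ∀ i, #(A i) ≤ c) : #(⋃ i, A i) ≤ #ι * c :=
  (mk_iUnion_le A).trans (mul_le_mul_right (ciSup_le' hA) _)

theorem exists_injOn_of_mk_le {α β : Type u} [Nonempty β] {s : Set α} (h : #s ≤ #β) :
    ∃ f : α → β, InjOn f s :=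
  have ⟨i⟩ : Nonempty (s ↪ β) := h
  exists_injOn_iff_injective.mpr ⟨i, i.injective⟩

theorem mk_setOf_bddAbove_le {P : Type u} [Preorder P] {κ : Cardinal.{u}} (hκ : κ.IsStrongLimit)
    (hP : #P ≤ κ) (hIic : ∀ x : P, #(Iic x) < κ) : #{t : Set P // BddAbove t} ≤ κ := by
  have hcover : {t : Set P | BddAbove t} = ⋃ x, 𝒫 (Iic x) := by
    ext t
    simp only [mem_ofPred_eq, mem_iUnion, mem_powerset_iff]
    rfl
  have hpow (x : P) : #(𝒫 (Iic x)) ≤ κ :=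
    (mk_powerset _).trans_le (hκ.isStrongPrelimit (hIic x)).le
  calc
    #{t : Set P | BddAbove t} ≤ #P * κ := hcover ▸ mk_iUnion_le_mul hpow
    _ ≤ κ * κ := mul_le_mul_left hP κ
    _ = κ := mul_eq_self hκ.aleph0_le

theorem exists_le_mk_Iic {K : Type u} [LinearOrder K] [WellFoundedLT K]
    (hK : (#K).ord = typeLT K) {μ : Cardinal.{u}} (hμ : μ < #K) : ∃ x : K, μ ≤ #(Iic x) := by
  have hμ' : μ.ord < typeLT K := hK ▸ ord_lt_ord.mpr hμ
  obtain ⟨x, hx⟩ := Ordinal.typein_surj (α := K) (· < ·) hμ'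
  refine ⟨x, ?_⟩
  calc
    μ = (Ordinal.typein (α := K) (· < ·) x).card := by rw [hx, card_ord]
    _ = #(Iio x) := Ordinal.card_typein x
    _ ≤ #(Iic x) := mk_le_mk_of_subset Iio_subset_Iic_self

end CardinalArithmetic

/-! ### Characters of ultrafilters -/

section Character

variable {S T : Type u}

theorem exists_base_mk_eq_charU (U : Ultrafilter S) :
    ∃ B : Set (Set S), #B = charU U ∧ (∀ X ∈ B, X ∈ U) ∧ ∀ Y ∈ U, ∃ X ∈ B, X ⊆ Y :=
  csInf_mem (s := {c | ∃ B : Set (Set S), #B = c ∧ (∀ X ∈ B, X ∈ U) ∧ ∀ Y ∈ U, ∃ X ∈ B, X ⊆ Y})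
    ⟨_, {X | X ∈ U}, rfl, fun _ hX => hX, fun Y hY => ⟨Y, hY, subset_rfl⟩⟩

theorem charU_le_mk {U : Ultrafilter S} {B : Set (Set S)} (hBU : ∀ X ∈ B, X ∈ U)
    (hB : ∀ Y ∈ U, ∃ X ∈ B, X ⊆ Y) : charU U ≤ #B :=
  csInf_le' ⟨B, rfl, hBU, hB⟩

theorem charU_le_two_power (U : Ultrafilter S) : charU U ≤ 2 ^ #S :=
  calc
    charU U ≤ #{X : Set S | X ∈ U} :=
      charU_le_mk (fun _ hX => hX) fun Y hY => ⟨Y, hY, subset_rfl⟩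
    _ ≤ #(Set S) := mk_set_le _
    _ = 2 ^ #S := mk_set

theorem charU_map_le (U : Ultrafilter S) (f : S → T) : charU (U.map f) ≤ charU U := by
  obtain ⟨B, hBcard, hBU, hB⟩ := exists_base_mk_eq_charU U
  calc
    charU (U.map f) ≤ #((f '' ·) '' B) := by
      refine charU_le_mk ?_ fun Y hY => ?_
      · rintro _ ⟨X, hX, rfl⟩
        exact image_mem_map (hBU X hX)
      · obtain ⟨X, hX, hXY⟩ := hB (f ⁻¹' Y) hY
        exact ⟨f '' X, mem_image_of_mem _ hX, image_subset_iff.mpr hXY⟩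
    _ ≤ #B := mk_image_le
    _ = charU U := hBcard

theorem mk_le_charU {U : Ultrafilter S} (hU : Uniform U) : #S ≤ charU U := by
  obtain ⟨B, hBcard, hBU, hB⟩ := exists_base_mk_eq_charU U
  choose a ha using fun X : B => U.nonempty_of_mem (hBU X X.2)
  have hrange : range a ∈ U := by
    by_contra hmem
    obtain ⟨X, hX, hXa⟩ := hB _ (Ultrafilter.compl_mem_iff_notMem.mpr hmem)
    exact hXa (ha ⟨X, hX⟩) (mem_range_self _)
  calc
    #S = #(range a) := (hU _ hrange).symm
    _ ≤ #B := mk_range_le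
    _ = charU U := hBcard

theorem uniform_of_forall_mk_lt_notMem {U : Ultrafilter S} (h : ∀ X : Set S, #X < #S → X ∉ U) :
    Uniform U := fun X hX =>
  (mk_set_le X).eq_of_not_lt fun hlt => h X hlt hX

theorem exists_uniform (hS : (#S).IsRegular) : ∃ U : Ultrafilter S, Uniform U := by
  have : (cocardinal S hS).NeBot := by
    simp [neBot_iff, ← empty_mem_iff_bot]
  refine ⟨Ultrafilter.of (cocardinal S hS), uniform_of_forall_mk_lt_notMem fun X hX => ?_⟩
  exact Ultrafilter.compl_mem_iff_notMem.mp
    (Ultrafilter.of_le _ (compl_mem_cocardinal_of_card_lt hX))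

theorem uNumber_le_charU {κ : Cardinal.{u}} {U : Ultrafilter κ.out} (hU : Uniform U) :
    uNumber κ ≤ charU U :=
  csInf_le' ⟨U, hU, rfl⟩

theorem exists_uniform_charU_eq_uNumber {κ : Cardinal.{u}} (hκ : κ.IsRegular) :
    ∃ U : Ultrafilter κ.out, Uniform U ∧ charU U = uNumber κ := by
  obtain ⟨U, hU⟩ := exists_uniform (S := κ.out) (by rwa [mk_out])
  exact csInf_mem (s := {c | ∃ U : Ultrafilter κ.out, Uniform U ∧ charU U = c}) ⟨_, U, hU, rfl⟩

theorem uNumber_le_two_power (κ : Cardinal.{u}) : uNumber κ ≤ 2 ^ κ := by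
  by_cases h : ∃ U : Ultrafilter κ.out, Uniform U
  · obtain ⟨U, hU⟩ := h
    simpa only [mk_out] using (uNumber_le_charU hU).trans (charU_le_two_power U)
  · have hempty : {c | ∃ U : Ultrafilter κ.out, Uniform U ∧ charU U = c} = ∅ :=
      eq_empty_of_forall_notMem fun _ ⟨U, hU, _⟩ => h ⟨U, hU⟩
    rw [uNumber, hempty, Cardinal.sInf_empty]
    exact zero_le

theorem uNumber_le_charU_of_decomposable {κ : Cardinal.{u}} {U : Ultrafilter S}
    (h : Decomposable U κ) : uNumber κ ≤ charU U := by
  obtain ⟨f, hf⟩ := h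
  have hmap : Uniform (U.map f) :=
    uniform_of_forall_mk_lt_notMem fun X hX => hf X (hX.trans_eq (mk_out κ))
  exact (uNumber_le_charU hmap).trans (charU_map_le U f)

end Character

/-! ### Regularity of ultrafilters -/

section Regularity

variable {S : Type u} {U : Ultrafilter S}

/-- `(θ, #ι)`-regularity of `U`: there is a family of members of `U` indexed by `ι` such that every
point lies in fewer than `θ` of them. The family is encoded by the sets `A s` of the indices of
those members that contain `s`. -/
def RegularOver (U : Ultrafilter S) (θ : Cardinal.{u}) (ι : Type u) : Prop :=
  ∃ A : S → Set ι, (∀ s, #(A s) < θ) ∧ ∀ i, ∀ᶠ s in U, i ∈ A s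

theorem regularOver_of_uniform (hS : ℵ₀ ≤ #S) (hU : Uniform U) : RegularOver U #S S := by
  obtain ⟨_, _, hord⟩ := exists_ord_eq_type_lt S
  refine ⟨Iic, fun s => mk_Iic_lt s hord hS, fun t => ?_⟩
  have hIio : Iio t ∉ U := fun hmem =>
    ((mk_le_mk_of_subset Iio_subset_Iic_self).trans_lt (mk_Iic_lt t hord hS)).ne (hU _ hmem)
  filter_upwards [Ultrafilter.compl_mem_iff_notMem.mpr hIio] with s hs
  exact not_lt.mp hs

theorem RegularOver.of_isBoundedUnder {K ι ι' : Type u} [Preorder K] (hK : ℵ₀ ≤ #K)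
    (hIic : ∀ x : K, #(Iic x) < #K) (hbdd : ∀ p : S → K, IsBoundedUnder (· ≤ ·) U p)
    (hU : RegularOver U (Order.succ #K) ι') (hι' : #K < #ι') (hι : #ι ≤ #K) :
    RegularOver U #K ι := by
  obtain ⟨D, hDcard, hDU⟩ := hU
  have : Nonempty K := mk_ne_zero_iff.mp (aleph0_pos.trans_le hK).ne'
  choose e he using fun s => exists_injOn_of_mk_le (β := K) (Order.lt_succ_iff.mp (hDcard s))
  choose x hx using fun j => hbdd fun s => e s j
  obtain ⟨z, hz⟩ := infinite_pigeonhole_card_lt x hι' (hK.trans hι'.le)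
  obtain ⟨i⟩ : Nonempty (ι ↪ x ⁻¹' {z}) := hι.trans hz.le
  refine ⟨fun s => {t | (i t : ι') ∈ D s ∧ e s (i t) ≤ z}, fun s => ?_, fun t => ?_⟩
  · have hinj : InjOn (fun t => e s (i t)) {t | (i t : ι') ∈ D s ∧ e s (i t) ≤ z} :=
      fun a ha b hb hab => i.injective (Subtype.ext (he s ha.1 hb.1 hab))
    rw [← mk_image_eq_of_injOn _ _ hinj]
    exact (mk_le_mk_of_subset (image_subset_iff.mpr fun _ ht => ht.2)).trans_lt (hIic z)
  · have hxt : x (i t) = z := (i t).2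
    filter_upwards [hDU (i t), hx (i t)] with s hs hle
    exact ⟨hs, hle.trans_eq hxt⟩

theorem exists_eq_biUnion_of_isBoundedUnder {K : Type u} [Preorder K]
    (hbdd : ∀ p : S → K, IsBoundedUnder (· ≤ ·) U p) {A : S → Set {t : Set K // BddAbove t}}
    (hA : ∀ t, ∀ᶠ s in U, t ∈ A s) (X : Set K) : ∃ s, ∃ B ⊆ A s, ⋃ t ∈ B, t.1 = X := by
  by_contra! hX
  have hmissed (s : S) : ∃ a ∈ X, ∀ t ∈ A s, t.1 ⊆ X → a ∉ t.1 := by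
    by_contra! hcovered
    refine hX s {t ∈ A s | t.1 ⊆ X} (fun t ht => ht.1) (subset_antisymm ?_ fun a ha => ?_)
    · exact iUnion₂_subset fun t ht => ht.2
    · obtain ⟨t, ht, htX, hat⟩ := hcovered a ha
      exact mem_biUnion ⟨ht, htX⟩ hat
  choose p hpX hp using hmissed
  obtain ⟨y, hy⟩ : ∃ y, ∀ᶠ s in U, p s ≤ y := hbdd p
  have htrace : BddAbove (X ∩ Iic y) := ⟨y, fun _ h => h.2⟩
  obtain ⟨s, hsy, hs⟩ := (hy.and (hA ⟨_, htrace⟩)).exists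
  exact hp s _ hs inter_subset_left ⟨hpX s, hsy⟩

theorem two_power_le_of_isBoundedUnder {K : Type u} [Preorder K] (hK : (#K).IsStrongLimit)
    (hbdd : ∀ p : S → K, IsBoundedUnder (· ≤ ·) U p)
    (hU : RegularOver U #K {t : Set K // BddAbove t}) : 2 ^ #K ≤ #S * #K := by
  obtain ⟨A, hAcard, hA⟩ := hU
  let union (B : Set {t : Set K // BddAbove t}) : Set K := ⋃ t ∈ B, t.1
  have hcover : ⋃ s, union '' 𝒫 (A s) = Set.univ := eq_univ_of_forall fun X =>
    mem_iUnion.mpr (exists_eq_biUnion_of_isBoundedUnder hbdd hA X)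
  have hpow (s : S) : #(union '' 𝒫 (A s)) ≤ #K :=
    mk_image_le.trans ((mk_powerset _).trans_le (hK.isStrongPrelimit (hAcard s)).le)
  calc
    2 ^ #K = #(⋃ s, union '' 𝒫 (A s)) := by rw [hcover, mk_univ, mk_set]
    _ ≤ #S * #K := mk_iUnion_le_mul hpow

theorem two_power_le_succ_of_isBoundedUnder {K : Type u} [Preorder K] (hK : (#K).IsStrongLimit)
    (hIic : ∀ x : K, #(Iic x) < #K) (hS : #S = Order.succ #K) (hU : Uniform U)
    (hbdd : ∀ p : S → K, IsBoundedUnder (· ≤ ·) U p) : 2 ^ #K ≤ Order.succ #K := by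
  have hinf : ℵ₀ ≤ #S := hS ▸ hK.aleph0_le.trans (Order.le_succ _)
  have hlt : #K < #S := hS ▸ Order.lt_succ _
  have hreg : RegularOver U #K {t : Set K // BddAbove t} :=
    .of_isBoundedUnder hK.aleph0_le hIic hbdd (hS ▸ regularOver_of_uniform hinf hU) hlt
      (mk_setOf_bddAbove_le hK le_rfl hIic)
  calc
    2 ^ #K ≤ #S * #K := two_power_le_of_isBoundedUnder hK hbdd hreg
    _ ≤ #S * #S := mul_le_mul_right hlt.le _
    _ = Order.succ #K := by rw [mul_eq_self hinf, hS]

end Regularity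

/-! ### Indecomposable ultrafilters -/

section Indecomposability

variable {S : Type u} {U : Ultrafilter S}

theorem exists_preimage_mem_of_not_decomposable {θ κ : Cardinal.{u}}
    (hU : ∀ l ∈ Icc θ κ, ¬ Decomposable U l) {T : Type u} (hT : #T ≤ κ) (g : S → T) :
    ∃ Y : Set T, #Y < θ ∧ g ⁻¹' Y ∈ U := by
  obtain ⟨Y, hYU, hYmin⟩ := exists_minimalFor_of_wellFoundedLT
    (fun Y : Set T => g ⁻¹' Y ∈ U) (fun Y => #Y) ⟨Set.univ, univ_mem⟩
  replace hYmin {Z : Set T} (hZ : g ⁻¹' Z ∈ U) : #Y ≤ #Z := (le_total _ _).elim id (hYmin hZ)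
  refine ⟨Y, lt_of_not_ge fun hθ => hU #Y ⟨hθ, (mk_set_le Y).trans hT⟩ ?_, hYU⟩
  have : Nonempty (#Y).out := by
    obtain ⟨s, hs⟩ := U.nonempty_of_mem hYU
    exact mk_ne_zero_iff.mp ((mk_out _).trans_ne (mk_ne_zero_iff.mpr ⟨⟨g s, hs⟩⟩))
  obtain ⟨f, hf⟩ := exists_injOn_of_mk_le (mk_out #Y).ge
  refine ⟨f ∘ g, fun X hX hXU => hX.not_ge ?_⟩
  have hfX : InjOn f (Y ∩ f ⁻¹' X) := hf.mono inter_subset_left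
  calc
    #Y ≤ #(Y ∩ f ⁻¹' X : Set T) := hYmin (inter_mem hYU hXU)
    _ = #(f '' (Y ∩ f ⁻¹' X)) := (mk_image_eq_of_injOn _ _ hfX).symm
    _ ≤ #X := mk_le_mk_of_subset (image_subset_iff.mpr inter_subset_right)

-- The graphs of the functions `c ↦ F c s`, truncated at `p s`, are bounded subsets of `K × K`. By
-- indecomposability fewer than `#K` of them occur, and each of them determines the value of `F c s`
-- as soon as `p s` is large enough.
theorem exists_forall_preimage_mem_of_isBoundedUnder {K : Type u} [Preorder K]
    (hK : (#K).IsStrongLimit) (hIic : ∀ x : K, #(Iic x) < #K) (hU : ¬ Decomposable U #K)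
    {p : S → K} (hp : Tendsto p U atTop) {F : K → S → K}
    (hF : ∀ c, IsBoundedUnder (· ≤ ·) U (F c)) :
    ∃ μ < #K, ∀ c, ∃ Y : Set K, #Y ≤ μ ∧ F c ⁻¹' Y ∈ U := by
  have hgraphs : #{t : Set (K × K) // BddAbove t} ≤ #K := by
    refine mk_setOf_bddAbove_le hK (by simp [mul_eq_self hK.aleph0_le]) fun x => ?_
    rw [← Iic_prod_Iic, mk_setProd]
    exact mul_lt_of_lt hK.aleph0_le (hIic _) (hIic _)
  let graph (s : S) : {t : Set (K × K) // BddAbove t} :=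
    ⟨{q | F q.1 s = q.2 ∧ q ≤ (p s, p s)}, (p s, p s), fun _ hq => hq.2⟩
  obtain ⟨Y, hYcard, hYU⟩ : ∃ Y : Set {t : Set (K × K) // BddAbove t}, #Y < #K ∧ graph ⁻¹' Y ∈ U :=
    exists_preimage_mem_of_not_decomposable (by simpa using hU) hgraphs graph
  have : Nonempty K := mk_ne_zero_iff.mp hK.ne_zero
  refine ⟨#Y, hYcard, fun c => ?_⟩
  let value (t : {t : Set (K × K) // BddAbove t}) : K := Classical.epsilon fun y => (c, y) ∈ t.1
  refine ⟨value '' Y, mk_image_le, ?_⟩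
  obtain ⟨w, hw⟩ := hF c
  filter_upwards [hYU, hw, tendsto_atTop.mp hp c, tendsto_atTop.mp hp w] with s hsY hsw hcs hws
  have hmem : (c, F c s) ∈ (graph s).1 := ⟨rfl, hcs, hsw.trans hws⟩
  have hvalue : (c, value (graph s)) ∈ (graph s).1 :=
    Classical.epsilon_spec (p := fun y => (c, y) ∈ (graph s).1) ⟨_, hmem⟩
  exact ⟨graph s, hsY, hvalue.1.symm⟩

theorem exists_lt_forall_not_decomposable {K : Type u} [LinearOrder K] [WellFoundedLT K]
    (hord : (#K).ord = typeLT K) (hK : (#K).IsStrongLimit) (hU : ¬ Decomposable U #K)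
    {p : S → K} (hp : Tendsto p U atTop) :
    ∃ θ < #K, ∀ l ∈ Icc θ #K, ¬ Decomposable U l := by
  have hIic (x : K) : #(Iic x) < #K := mk_Iic_lt x hord hK.aleph0_le
  by_contra! hdec
  have hbad (c : K) : ∃ F : S → K, IsBoundedUnder (· ≤ ·) U F ∧
      ∀ Y : Set K, #Y < #(Iic c) → F ⁻¹' Y ∉ U := by
    obtain ⟨l, ⟨hcl, hlK⟩, hl⟩ := hdec _ (hIic c)
    have hlt : l < #K := hlK.lt_of_ne fun h => hU (h ▸ hl)
    obtain ⟨w, hw⟩ := exists_le_mk_Iic hord hlt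
    obtain ⟨i⟩ : Nonempty (l.out ↪ Iic w) := (mk_out l).trans_le hw
    obtain ⟨f, hf⟩ := hl
    refine ⟨fun s => i (f s), isBoundedUnder_of ⟨w, fun s => (i (f s)).2⟩, fun Y hY => ?_⟩
    have hinj : Function.Injective fun j => (i j : K) := Subtype.val_injective.comp i.injective
    exact hf _ ((mk_preimage_of_injective _ Y hinj).trans_lt (hY.trans_le hcl))
  choose F hF hFU using hbad
  obtain ⟨μ, hμ, hμF⟩ := exists_forall_preimage_mem_of_isBoundedUnder hK hIic hU hp hF
  obtain ⟨c, hc⟩ := exists_le_mk_Iic hord (hK.isSuccLimit.succ_lt hμ)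
  obtain ⟨Y, hY, hYU⟩ := hμF c
  exact hFU c Y (hY.trans_lt ((Order.lt_succ μ).trans_le hc)) hYU

theorem mk_le_power_of_not_decomposable {θ κ : Cardinal.{u}}
    (hU : ∀ l ∈ Icc θ κ, ¬ Decomposable U l) {C : Type u} [Nonempty C]
    {J : Set (Germ (U : Filter S) C)} (hJ : #C ^ #J ≤ κ) : #J ≤ #C ^ θ := by
  let rep (j : J) : S → C := Quotient.out j.1
  have hrep (j : J) : (rep j : Germ (U : Filter S) C) = j := Quotient.out_eq j.1
  obtain ⟨Y, hYcard, hYU⟩ :=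
    exists_preimage_mem_of_not_decomposable hU (T := J → C) (by simpa using hJ) fun s j => rep j s
  have hinj : Function.Injective fun (j : J) (v : Y) => v.1 j := by
    intro j j' hjj'
    have hae : rep j =ᶠ[U] rep j' := by
      filter_upwards [hYU] with s hs
      exact congrFun hjj' ⟨_, hs⟩
    rw [Subtype.ext_iff, ← hrep j, ← hrep j', Germ.coe_eq.mpr hae]
  calc
    #J ≤ #(Y → C) := mk_le_of_injective hinj
    _ = #C ^ #Y := (power_def C Y).symm
    _ ≤ #C ^ θ := power_le_power_left (mk_ne_zero C) hYcard.le

theorem mk_germ_le_power_of_not_decomposable {θ κ : Cardinal.{u}} (hκ : κ.IsStrongLimit)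
    (hU : ∀ l ∈ Icc θ κ, ¬ Decomposable U l) (hθ : θ < κ) {C : Type u} [Nonempty C]
    (hC : #C < κ) : #(Germ (U : Filter S) C) ≤ #C ^ θ := by
  by_contra! hlt
  obtain ⟨J, hJ⟩ := le_mk_iff_exists_set.mp (Order.succ_le_of_lt hlt)
  have hJκ : #J < κ := hJ ▸ hκ.isSuccLimit.succ_lt (power_lt_of_isStrongLimit hκ hC hθ)
  have hle := mk_le_power_of_not_decomposable hU (power_lt_of_isStrongLimit hκ hC hJκ).le
  exact (Order.lt_succ _).not_ge (hJ ▸ hle)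

theorem exists_forall_mem_of_not_decomposable {θ κ : Cardinal.{u}}
    (hU : ∀ l ∈ Icc θ κ, ¬ Decomposable U l) {C T : Type u} (hT : #T ≤ κ) (f : C → S → T) :
    ∃ Y : Set T, #Y ≤ #(Germ (U : Filter S) C) * θ ∧ ∀ᶠ s in U, ∀ c, f c s ∈ Y := by
  let rep (q : Germ (U : Filter S) C) : S → C := Quotient.out q
  choose Y hYcard hYU using fun q =>
    exists_preimage_mem_of_not_decomposable hU hT fun s => f (rep q s) s
  refine ⟨⋃ q, Y q, mk_iUnion_le_mul fun q => (hYcard q).le, ?_⟩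
  by_contra hnot
  have hescape : ∀ᶠ s in U, ∃ c, f c s ∉ ⋃ q, Y q := by
    simpa only [not_forall] using Ultrafilter.eventually_not.mpr hnot
  have : Nonempty C := hescape.exists.elim fun _ ⟨c, _⟩ => ⟨c⟩
  obtain ⟨r, hr⟩ := hescape.choice
  have hrep : rep (r : Germ (U : Filter S) C) =ᶠ[U] r := Germ.coe_eq.mp (Quotient.out_eq _)
  obtain ⟨s, hs, hrs, hYs⟩ := (hr.and (hrep.and (hYU r))).exists
  exact hs (mem_iUnion.mpr ⟨r, hrs ▸ hYs⟩)

theorem isCofinal_of_tendsto_atTop {α K : Type u} [Preorder K] {l : Filter α} [l.NeBot]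
    {p : α → K} (hp : Tendsto p l atTop) {C : Set K} (hC : p ⁻¹' C ∈ l) : IsCofinal C := fun x =>
  have ⟨a, haC, hxa⟩ := (Filter.Eventually.and hC (tendsto_atTop.mp hp x)).exists
  ⟨p a, haC, hxa⟩

theorem exists_mem_mk_lt_of_isCofinal {K : Type u} [Preorder K] (hK : (#K).IsStrongLimit)
    (hIic : ∀ x : K, #(Iic x) < #K) {θ : Cardinal.{u}} (hθ : θ < #K)
    (hU : ∀ l ∈ Icc θ #K, ¬ Decomposable U l) {C : Set K} (hC : IsCofinal C) (hCcard : #C < #K)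
    (hS : #S ≤ 2 ^ #K) : ∃ X ∈ U, #X < #K := by
  obtain ⟨X⟩ : Nonempty (S ↪ Set K) := hS.trans_eq mk_set.symm
  let trace (c : C) (s : S) : {t : Set K // BddAbove t} := ⟨X s ∩ Iic c.1, c, fun _ h => h.2⟩
  obtain ⟨Y, hYcard, hYU⟩ :=
    exists_forall_mem_of_not_decomposable hU (mk_setOf_bddAbove_le hK le_rfl hIic) trace
  have : Nonempty K := mk_ne_zero_iff.mp hK.ne_zero
  have : Nonempty C := (hC (Classical.arbitrary K)).elim fun c hc => ⟨⟨c, hc.1⟩⟩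
  have hgerm : #(Germ (U : Filter S) C) < #K :=
    (mk_germ_le_power_of_not_decomposable hK hU hθ hCcard).trans_lt
      (power_lt_of_isStrongLimit hK hCcard hθ)
  have hYlt : #Y < #K := hYcard.trans_lt (mul_lt_of_lt hK.aleph0_le hgerm hθ)
  have hX (s : S) : ⋃ c, (trace c s).1 = X s := by
    rw [← inter_iUnion, inter_eq_left]
    intro x _
    obtain ⟨c, hcC, hxc⟩ := hC x
    exact mem_iUnion.mpr ⟨⟨c, hcC⟩, hxc⟩
  have hinj : Function.Injective
      fun (s : {s | ∀ c, trace c s ∈ Y}) (c : C) => (⟨trace c s, s.2 c⟩ : Y) := by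
    intro s s' hss'
    have htrace (c : C) : trace c s = trace c s' := congrArg Subtype.val (congrFun hss' c)
    apply Subtype.ext (X.injective _)
    rw [← hX s, ← hX s', iUnion_congr fun c => congrArg Subtype.val (htrace c)]
  refine ⟨{s | ∀ c, trace c s ∈ Y}, hYU, ?_⟩
  calc
    #{s | ∀ c, trace c s ∈ Y} ≤ #(C → Y) := mk_le_of_injective hinj
    _ = #Y ^ #C := (power_def Y C).symm
    _ < #K := power_lt_of_isStrongLimit hK hYlt hCcard

theorem isBoundedUnder_of_not_decomposable {K : Type u} [LinearOrder K] [WellFoundedLT K]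
    (hord : (#K).ord = typeLT K) (hK : (#K).IsStrongLimit) (hSle : #S ≤ 2 ^ #K)
    (hUK : ∀ X ∈ U, #K ≤ #X) (hU : ¬ Decomposable U #K) (p : S → K) :
    IsBoundedUnder (· ≤ ·) U p := by
  by_contra hbdd
  have hp : Tendsto p U atTop := tendsto_atTop.mpr fun x => by
    have hx : ¬ ∀ᶠ s in U, p s ≤ x := fun h => hbdd ⟨x, h⟩
    exact (Ultrafilter.eventually_not.mpr hx).mono fun _ hs => (not_le.mp hs).le
  obtain ⟨θ, hθ, hUθ⟩ := exists_lt_forall_not_decomposable hord hK hU hp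
  obtain ⟨C, hCcard, hCU⟩ :=
    exists_preimage_mem_of_not_decomposable (θ := #K) (by simpa using hU) le_rfl p
  obtain ⟨X, hXU, hX⟩ := exists_mem_mk_lt_of_isCofinal hK
    (fun x => mk_Iic_lt x hord hK.aleph0_le) hθ hUθ (isCofinal_of_tendsto_atTop hp hCU) hCcard hSle
  exact hX.not_ge (hUK X hXU)

theorem two_power_le_succ_of_not_decomposable {κ : Cardinal.{u}} (hκ : κ.IsStrongLimit)
    (hS : #S = Order.succ κ) (hU : Uniform U) (hdec : ¬ Decomposable U κ) :
    2 ^ κ ≤ Order.succ κ := by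
  induction κ using Cardinal.inductionOn with | _ K
  obtain ⟨_, _, hord⟩ := exists_ord_eq_type_lt K
  refine two_power_le_succ_of_isBoundedUnder hκ (fun x => mk_Iic_lt x hord hκ.aleph0_le) hS hU ?_
  refine isBoundedUnder_of_not_decomposable hord hκ ?_ (fun X hX => ?_) hdec
  · exact hS.trans_le (Order.succ_le_of_lt (cantor _))
  · exact (Order.le_succ _).trans_eq (hS.symm.trans (hU X hX).symm)

end Indecomposability

theorem stmt16_general (κ : Cardinal.{u}) (hκ : κ.IsStrongLimit) :
    uNumber κ ≤ uNumber (Order.succ κ) := by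
  obtain ⟨U, hU, hchar⟩ := exists_uniform_charU_eq_uNumber (isRegular_succ hκ.aleph0_le)
  rw [← hchar]
  by_cases hdec : Decomposable U κ
  · exact uNumber_le_charU_of_decomposable hdec
  · calc
      uNumber κ ≤ 2 ^ κ := uNumber_le_two_power κ
      _ ≤ Order.succ κ := two_power_le_succ_of_not_decomposable hκ (mk_out _) hU hdec
      _ = #(Order.succ κ).out := (mk_out _).symm
      _ ≤ charU U := mk_le_charU hU

/-- If `κ` is a strong limit singular cardinal then `u(κ) ≤ u(κ⁺)`. -/
theorem stmt16 (κ : Cardinal.{u}) (hsl : κ.IsStrongLimit) (hsing : κ.ord.cof < κ) :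
    uNumber κ ≤ uNumber (Order.succ κ) :=
  stmt16_general κ hsl
end
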